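/- arXiv:1508.02106 — 2 statements merged into one kernel-verified Lean document; each statement's English description precedes it below -/
import Mathlib

section
/- For all real x ≥ 1, ∑_{n ≤ x} 2^{ω(n)}/n ≤ (3/π²)·log²x + 1.3948·log x + 0.4107 + 3.253·x^{-1/3}. -/
/-!
On prime powers one checks that `2 ^ ω(n) / n` is the Dirichlet convolution of the function
`k ^ 2 ↦ μ(k) / k ^ 2` with `n ↦ d(n) / n`. Hence, for `x = u ^ 2`,
`∑_{n ≤ x} 2 ^ ω(n) / n = ∑_{k ≤ u} μ(k) / k ^ 2 * D(u / k)` with `D(t) = ∑_{n ≤ t ^ 2} d(n) / n`.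

The hyperbola method gives `D(t) = 2 log² t + 4 γ log t + γ² - 2 γ₁ + O(1 / t)` with explicit error.
Summing the main term over all `k` leaves the sums `∑ μ(k) log^j k / k ^ 2`, `j ≤ 2`, which are
found by differentiating `ζ(s) * ζ(s)⁻¹ = 1` twice at `s = 2`; the terms with `k > u` are dominated
by a decreasing function, hence by an integral. The constants `γ`, `γ₁`, `ζ'(2)` and `ζ''(2)` are
enclosed by Euler–Maclaurin summation, all of them being limits of sums of functions in the family
`(a log² t + b log t + c) / t ^ k`, which is closed under differentiation.

This proves the bound for `x ≥ 100`. Below `100` it is a finite check in integer arithmetic, the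
right-hand side being increasing in `log x` apart from the last term, which is at least `0.7`.
-/

open Filter Topology Finset
open ArithmeticFunction (moebius)

local notation "γ" => Real.eulerMascheroniConstant

section EulerMaclaurin

theorem le_of_tendsto_of_succ_le {s : ℕ → ℝ} {l : ℝ} {N : ℕ} (hs : ∀ n ≥ N, s (n + 1) ≤ s n)
    (hl : Tendsto s atTop (𝓝 l)) : l ≤ s N :=
  le_of_tendsto hl <| (eventually_ge_atTop N).mono fun n hn =>
    Nat.le_induction le_rfl (fun k hk ih => (hs k hk).trans ih) n hn

theorem ge_of_tendsto_of_le_succ {s : ℕ → ℝ} {l : ℝ} {N : ℕ} (hs : ∀ n ≥ N, s n ≤ s (n + 1))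
    (hl : Tendsto s atTop (𝓝 l)) : s N ≤ l := by
  simpa using le_of_tendsto_of_succ_le (fun n hn => neg_le_neg (hs n hn)) hl.neg

/-- The error of the trapezoidal rule with end correction on `[a, a + 1]`, for a chain of successive
derivatives `f 0, f 1, f 2, …`; the integrand is `f 1`. -/
noncomputable def trapezoidDefect (f : ℕ → ℝ → ℝ) (a : ℝ) : ℝ :=
  f 0 (a + 1) - f 0 a - (f 1 a + f 1 (a + 1)) / 2 + (f 2 (a + 1) - f 2 a) / 12

/-- The antiderivative of `K(t - a) f₅(t)`, with the Peano kernel `K(s) = s² (1 - s)² / 24` of the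
corrected trapezoidal rule, obtained by repeated integration by parts. -/
noncomputable def peanoPrimitive (f : ℕ → ℝ → ℝ) (a t : ℝ) : ℝ :=
  (t - a) ^ 2 * (a + 1 - t) ^ 2 / 24 * f 4 t -
    (t - a) * (a + 1 - t) * (2 * a + 1 - 2 * t) / 12 * f 3 t +
    (6 * (t - a) ^ 2 - 6 * (t - a) + 1) / 12 * f 2 t - (t - a - 1 / 2) * f 1 t + f 0 t

variable {f : ℕ → ℝ → ℝ} {a : ℝ}

theorem peanoPrimitive_sub (f : ℕ → ℝ → ℝ) (a : ℝ) :
    peanoPrimitive f a (a + 1) - peanoPrimitive f a a = trapezoidDefect f a := by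
  unfold peanoPrimitive trapezoidDefect
  ring

theorem hasDerivAt_peanoPrimitive {t : ℝ} (hf : ∀ i < 5, HasDerivAt (f i) (f (i + 1) t) t) :
    HasDerivAt (peanoPrimitive f a) ((t - a) ^ 2 * (a + 1 - t) ^ 2 / 24 * f 5 t) t := by
  have hl : HasDerivAt (fun t => t - a) 1 t := (hasDerivAt_id t).sub_const a
  have hr : HasDerivAt (fun t => a + 1 - t) (-1) t := (hasDerivAt_id t).const_sub (a + 1)
  have hm : HasDerivAt (fun t => 2 * a + 1 - 2 * t) (-(2 * 1)) t :=
    ((hasDerivAt_id t).const_mul 2).const_sub (2 * a + 1)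
  have h4 := (((hl.pow 2).mul (hr.pow 2)).div_const 24).mul (hf 4 (by norm_num))
  have h3 := (((hl.mul hr).mul hm).div_const 12).mul (hf 3 (by norm_num))
  have h2 := (((((hl.pow 2).const_mul 6).sub (hl.const_mul 6)).add_const 1).div_const 12).mul
    (hf 2 (by norm_num))
  have h1 := (hl.sub_const (1 / 2)).mul (hf 1 (by norm_num))
  refine (((((h4.sub h3).add h2).sub h1).add (hf 0 (by norm_num))).congr_deriv ?_)
  simp only [Pi.mul_apply, Pi.pow_apply, Pi.sub_apply]
  ring

theorem trapezoidDefect_mem_Icc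
    (hf : ∀ i < 5, ∀ t ∈ Set.Icc a (a + 1), HasDerivAt (f i) (f (i + 1) t) t)
    (hpos : ∀ t ∈ Set.Icc a (a + 1), 0 ≤ f 5 t) :
    trapezoidDefect f a ∈ Set.Icc 0 ((f 4 (a + 1) - f 4 a) / 384) := by
  have hP : ∀ t ∈ Set.Icc a (a + 1), HasDerivAt (peanoPrimitive f a) _ t := fun t ht =>
    hasDerivAt_peanoPrimitive fun i hi => hf i hi t ht
  have hR : ∀ t ∈ Set.Icc a (a + 1),
      HasDerivAt (fun t => f 4 t / 384 - peanoPrimitive f a t) _ t := fun t ht =>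
    ((hf 4 (by norm_num) t ht).div_const 384).sub (hP t ht)
  have hab : a ≤ a + 1 := by linarith
  have kernel_le (t : ℝ) (ht : t ∈ Set.Icc a (a + 1)) :
      (t - a) ^ 2 * (a + 1 - t) ^ 2 / 24 ≤ 1 / 384 := by
    have h : (t - a) * (a + 1 - t) ≤ 1 / 4 := by nlinarith [sq_nonneg (t - a - 1 / 2)]
    have h0 : 0 ≤ (t - a) * (a + 1 - t) := mul_nonneg (by linarith [ht.1]) (by linarith [ht.2])
    nlinarith [pow_le_pow_left₀ h0 h 2]
  have lower := monotoneOn_of_hasDerivWithinAt_nonneg (convex_Icc a (a + 1))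
    (fun t ht => (hP t ht).continuousAt.continuousWithinAt)
    (fun t ht => (hP t (interior_subset ht)).hasDerivWithinAt)
    (fun t ht => mul_nonneg (by positivity) (hpos t (interior_subset ht)))
    (Set.left_mem_Icc.2 hab) (Set.right_mem_Icc.2 hab) hab
  have upper := monotoneOn_of_hasDerivWithinAt_nonneg (convex_Icc a (a + 1))
    (fun t ht => (hR t ht).continuousAt.continuousWithinAt)
    (fun t ht => (hR t (interior_subset ht)).hasDerivWithinAt)
    (fun t ht => by
      have := mul_le_mul_of_nonneg_right (kernel_le t (interior_subset ht))
        (hpos t (interior_subset ht))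
      linarith)
    (Set.left_mem_Icc.2 hab) (Set.right_mem_Icc.2 hab) hab
  rw [← peanoPrimitive_sub]
  constructor <;> linarith

/-- The Euler–Maclaurin approximation, from the first `n` terms, to the limit of
`∑_{k ≤ n} f 1 k - f 0 n`. -/
noncomputable def eulerMaclaurinSeq (f : ℕ → ℝ → ℝ) (n : ℕ) : ℝ :=
  ∑ k ∈ Ioc 0 n, f 1 k - f 0 n - f 1 n / 2 - f 2 n / 12

theorem eulerMaclaurinSeq_succ (f : ℕ → ℝ → ℝ) (n : ℕ) :
    eulerMaclaurinSeq f (n + 1) = eulerMaclaurinSeq f n - trapezoidDefect f n := by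
  unfold eulerMaclaurinSeq trapezoidDefect
  rw [sum_Ioc_succ_top n.zero_le]
  push_cast
  ring

theorem eulerMaclaurin_bounds {N : ℕ} {l : ℝ}
    (hf : ∀ i < 5, ∀ t : ℝ, N ≤ t → HasDerivAt (f i) (f (i + 1) t) t)
    (hpos : ∀ t : ℝ, N ≤ t → 0 ≤ f 5 t)
    (hzero : ∀ i ∈ ({1, 2, 4} : Finset ℕ), Tendsto (fun n : ℕ => f i n) atTop (𝓝 0))
    (hl : Tendsto (fun n : ℕ => ∑ k ∈ Ioc 0 n, f 1 k - f 0 n) atTop (𝓝 l)) :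
    eulerMaclaurinSeq f N + f 4 N / 384 ≤ l ∧ l ≤ eulerMaclaurinSeq f N := by
  have hE : Tendsto (eulerMaclaurinSeq f) atTop (𝓝 l) := by
    have h := (hl.sub ((hzero 1 (by decide)).div_const 2)).sub ((hzero 2 (by decide)).div_const 12)
    rwa [zero_div, zero_div, sub_zero, sub_zero] at h
  have hE4 : Tendsto (fun n : ℕ => eulerMaclaurinSeq f n + f 4 n / 384) atTop (𝓝 l) := by
    have h := hE.add ((hzero 4 (by decide)).div_const 384)
    rwa [zero_div, add_zero] at h
  have defect (n : ℕ) (hn : N ≤ n) :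
      trapezoidDefect f n ∈ Set.Icc 0 ((f 4 (n + 1) - f 4 n) / 384) := by
    have hN (t : ℝ) (ht : t ∈ Set.Icc (n : ℝ) (n + 1)) : N ≤ t := (Nat.cast_le.2 hn).trans ht.1
    exact trapezoidDefect_mem_Icc (fun i hi t ht => hf i hi t (hN t ht))
      fun t ht => hpos t (hN t ht)
  refine ⟨ge_of_tendsto_of_le_succ (fun n hn => ?_) hE4,
    le_of_tendsto_of_succ_le (fun n hn => ?_) hE⟩ <;> rw [eulerMaclaurinSeq_succ]
  · push_cast
    linarith [(defect n hn).2]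
  · linarith [(defect n hn).1]

end EulerMaclaurin

section LogQuadDiv

/-- The function `t ↦ (a log² t + b log t + c) / t ^ k`; this family is closed under
differentiation. -/
noncomputable def logQuadDiv (a b c : ℝ) (k : ℕ) (t : ℝ) : ℝ :=
  (a * Real.log t ^ 2 + b * Real.log t + c) / t ^ k

/-- The `i`-th derivative of `logQuadDiv a b c k` on `t > 0`. -/
noncomputable def logQuadDivDeriv (a b c : ℝ) (k : ℕ) : ℕ → ℝ → ℝ
  | 0 => logQuadDiv a b c k
  | i + 1 => logQuadDivDeriv (-k * a) (2 * a - k * b) (b - k * c) (k + 1) i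

variable (a b c : ℝ) (k : ℕ)

theorem hasDerivAt_logQuadDiv {t : ℝ} (ht : 0 < t) :
    HasDerivAt (logQuadDiv a b c k)
      (logQuadDiv (-k * a) (2 * a - k * b) (b - k * c) (k + 1) t) t := by
  have hlog := Real.hasDerivAt_log ht.ne'
  have h := ((((hlog.pow 2).const_mul a).add (hlog.const_mul b)).add_const c).div
    (hasDerivAt_pow k t) (pow_ne_zero k ht.ne')
  refine h.congr_deriv ?_
  unfold logQuadDiv
  rcases k with _ | k
  · simp only [Nat.cast_ofNat, Nat.add_one_sub_one, pow_one, pow_zero, mul_one, Pi.pow_apply,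
      Pi.add_apply, CharP.cast_eq_zero, zero_tsub, mul_zero, sub_zero, one_pow, div_one, neg_zero,
      zero_mul, zero_add]
    field_simp
  · simp only [Nat.add_sub_cancel, Pi.add_apply, Pi.pow_apply]
    field_simp
    push_cast
    ring

theorem hasDerivAt_logQuadDivDeriv (i : ℕ) {t : ℝ} (ht : 0 < t) :
    HasDerivAt (logQuadDivDeriv a b c k i) (logQuadDivDeriv a b c k (i + 1) t) t := by
  induction i generalizing a b c k with
  | zero => exact hasDerivAt_logQuadDiv a b c k ht
  | succ _ ih => exact ih _ _ _ _

theorem tendsto_log_pow_div_pow_atTop (j : ℕ) {k : ℕ} (hk : k ≠ 0) :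
    Tendsto (fun t : ℝ => Real.log t ^ j / t ^ k) atTop (𝓝 0) := by
  simpa only [Real.rpow_natCast] using
    (isLittleO_log_rpow_rpow_atTop j (Nat.cast_pos.2 hk.bot_lt)).tendsto_div_nhds_zero

theorem tendsto_logQuadDiv {k : ℕ} (hk : k ≠ 0) :
    Tendsto (logQuadDiv a b c k) atTop (𝓝 0) := by
  have h := (((tendsto_log_pow_div_pow_atTop 2 hk).const_mul a).add
    ((tendsto_log_pow_div_pow_atTop 1 hk).const_mul b)).add
    ((tendsto_log_pow_div_pow_atTop 0 hk).const_mul c)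
  simp only [mul_zero, add_zero] at h
  refine h.congr fun t => ?_
  unfold logQuadDiv
  ring

theorem tendsto_logQuadDivDeriv (i : ℕ) (h : k + i ≠ 0) :
    Tendsto (logQuadDivDeriv a b c k i) atTop (𝓝 0) := by
  induction i generalizing a b c k with
  | zero => exact tendsto_logQuadDiv a b c h
  | succ i ih => exact ih _ _ _ _ (by omega)

variable {a b c k} in
theorem logQuadDiv_eulerMaclaurin_bounds {l : ℝ} {N : ℕ} (hN : 0 < N)
    (hpos : ∀ t : ℝ, N ≤ t → 0 ≤ logQuadDivDeriv a b c k 5 t)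
    (hl : Tendsto (fun n : ℕ => ∑ j ∈ Ioc 0 n, logQuadDivDeriv a b c k 1 j - logQuadDiv a b c k n)
      atTop (𝓝 l)) :
    eulerMaclaurinSeq (logQuadDivDeriv a b c k) N + logQuadDivDeriv a b c k 4 N / 384 ≤ l ∧
      l ≤ eulerMaclaurinSeq (logQuadDivDeriv a b c k) N := by
  refine eulerMaclaurin_bounds (fun i _ t ht => ?_) hpos (fun i hi => ?_) hl
  · exact hasDerivAt_logQuadDivDeriv a b c k i ((Nat.cast_pos.2 hN).trans_le ht)
  · refine (tendsto_logQuadDivDeriv a b c k i ?_).comp tendsto_natCast_atTop_atTop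
    have : i ≠ 0 := by rintro rfl; revert hi; decide
    omega

end LogQuadDiv

section Harmonic

theorem harmonic_eq_sum_Ioc (n : ℕ) : (harmonic n : ℝ) = ∑ k ∈ Ioc 0 n, (1 : ℝ) / k := by
  rw [harmonic_eq_sum_Icc]
  push_cast
  simp only [one_div]
  rfl

/-- The remainder in the approximation of `∑_{k ≤ n} 1 / k` by `log u + γ`; in applications
`n ≤ u ≤ n + 1`. -/
noncomputable def harmonicRemainder (n : ℕ) (u : ℝ) : ℝ := harmonic n - Real.log u - γ

theorem harmonicRemainder_self_bounds {n : ℕ} (hn : 0 < n) :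
    1 / (2 * n) - 1 / (12 * (n : ℝ) ^ 2) ≤ harmonicRemainder n n ∧
      harmonicRemainder n n ≤
        1 / (2 * n) - 1 / (12 * (n : ℝ) ^ 2) + 1 / (64 * (n : ℝ) ^ 4) := by
  have h := logQuadDiv_eulerMaclaurin_bounds (a := 0) (b := 1) (c := 0) (k := 0) (l := γ) hn
    (fun t ht => by
      have : 0 < t := (Nat.cast_pos.2 hn).trans_le ht
      norm_num [logQuadDivDeriv, logQuadDiv]
      positivity)
    (by simpa [logQuadDivDeriv, logQuadDiv, harmonic_eq_sum_Ioc] using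
      Real.tendsto_harmonic_sub_log)
  norm_num [logQuadDivDeriv, logQuadDiv, eulerMaclaurinSeq] at h
  unfold harmonicRemainder
  rw [harmonic_eq_sum_Ioc]
  simp only [one_div]
  constructor
  · linear_combination h.2
  · linear_combination h.1

theorem log_succ_sub_log_bounds {n : ℕ} (hn : 0 < n) :
    (1 / n + 1 / (n + 1)) / 2 - (1 / (n : ℝ) ^ 2 - 1 / ((n : ℝ) + 1) ^ 2) / 12 ≤
        Real.log (n + 1) - Real.log n ∧
      Real.log (n + 1) - Real.log n ≤
        (1 / n + 1 / (n + 1)) / 2 - (1 / (n : ℝ) ^ 2 - 1 / ((n : ℝ) + 1) ^ 2) / 12 +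
          (1 / (n : ℝ) ^ 4 - 1 / ((n : ℝ) + 1) ^ 4) / 64 := by
  have pos (t : ℝ) (ht : t ∈ Set.Icc (n : ℝ) (n + 1)) : 0 < t := (Nat.cast_pos.2 hn).trans_le ht.1
  have h := trapezoidDefect_mem_Icc (f := logQuadDivDeriv 0 1 0 0) (a := n)
    (fun i _ t ht => hasDerivAt_logQuadDivDeriv _ _ _ _ i (pos t ht))
    (fun t ht => by
      have := pos t ht
      norm_num [logQuadDivDeriv, logQuadDiv]
      positivity)
  norm_num [trapezoidDefect, logQuadDivDeriv, logQuadDiv] at h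
  simp only [one_div]
  constructor
  · linear_combination h.1
  · linear_combination h.2

theorem log_seven_bounds : 1.945910147 < Real.log 7 ∧ Real.log 7 < 1.945910151 := by
  have h := log_succ_sub_log_bounds (n := 49) (by norm_num)
  have log_fifty : Real.log 50 = Real.log 2 + 2 * Real.log 5 := by
    rw [show (50 : ℝ) = 2 * 5 ^ 2 by norm_num, Real.log_mul (by norm_num) (by norm_num),
      Real.log_pow, Nat.cast_ofNat]
  have log_forty_nine : Real.log 49 = 2 * Real.log 7 := by
    rw [show (49 : ℝ) = 7 ^ 2 by norm_num, Real.log_pow, Nat.cast_ofNat]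
  norm_num [log_fifty, log_forty_nine] at h
  constructor <;> linarith [Real.log_two_gt_d9, Real.log_two_lt_d9, Real.log_five_gt_d9,
    Real.log_five_lt_d9]

theorem eulerMascheroniConstant_bounds : 0.57721565 < γ ∧ γ < 0.577215676 := by
  have h := harmonicRemainder_self_bounds (n := 32) (by norm_num)
  have log_32 : Real.log 32 = 5 * Real.log 2 := by
    rw [show (32 : ℝ) = 2 ^ 5 by norm_num, Real.log_pow, Nat.cast_ofNat]
  norm_num [harmonicRemainder, harmonic, sum_range_succ, log_32] at h
  constructor <;> linarith [Real.log_two_gt_d9, Real.log_two_lt_d9]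

theorem harmonicRemainder_self_le {n : ℕ} (hn : 0 < n) :
    harmonicRemainder n n ≤ 1 / (2 * n) := by
  have hn1 : (1 : ℝ) ≤ n := by exact_mod_cast hn
  have h : 1 / (64 * (n : ℝ) ^ 4) ≤ 1 / (12 * (n : ℝ) ^ 2) := by
    gcongr
    · norm_num
    · norm_num
  linarith [(harmonicRemainder_self_bounds hn).2]

theorem abs_harmonicRemainder_floor_le {t : ℝ} (ht : 1 ≤ t) :
    |harmonicRemainder ⌊t⌋₊ t| ≤ 1 / (2 * t) + 1 / (12 * t ^ 2) := by
  have hn : 0 < ⌊t⌋₊ := Nat.floor_pos.2 ht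
  have hnt := Nat.floor_le (zero_le_one.trans ht)
  have htn := Nat.lt_floor_add_one t
  set n := ⌊t⌋₊
  have hn1 : (1 : ℝ) ≤ n := by exact_mod_cast hn
  rw [abs_le]
  constructor
  · have h := (harmonicRemainder_self_bounds n.succ_pos).1
    have hlog : Real.log t ≤ Real.log (n + 1) := Real.log_le_log (by linarith) htn.le
    have h1 : 1 / (12 * ((n : ℝ) + 1) ^ 2) ≤ 1 / (12 * t ^ 2) := by gcongr
    have h2 : 1 / (2 * ((n : ℝ) + 1)) ≤ 1 / (2 * t) := by gcongr
    have h3 : ((n : ℝ) + 1)⁻¹ = 2 * (1 / (2 * (n + 1))) := by field_simp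
    simp only [harmonicRemainder, Nat.succ_eq_add_one, harmonic_succ] at h ⊢
    push_cast at h
    linarith
  · have h := harmonicRemainder_self_le hn
    have hlog := Real.one_sub_inv_le_log_of_pos (x := t / n) (by positivity)
    rw [Real.log_div (by positivity) (by positivity), inv_div] at hlog
    have h1 : 1 / (2 * n) - 1 / (2 * t) ≤ 1 - n / t := by
      have h0 : 0 ≤ t - n := by linarith
      have : 1 / (2 * n) - 1 / (2 * t) = (t - n) * 1 / (2 * n * t) := by field_simp
      rw [this, one_sub_div (by positivity), div_le_div_iff₀ (by positivity) (by positivity)]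
      have ht0 : 0 ≤ t := by positivity
      nlinarith [mul_nonneg h0 ht0, mul_nonneg h0 (mul_nonneg ht0 (sub_nonneg.2 hn1))]
    have h2 : 0 ≤ 1 / (12 * t ^ 2) := by positivity
    simp only [harmonicRemainder] at h ⊢
    linarith

end Harmonic

section Stieltjes

/-- The remainder in the approximation of `∑_{k ≤ n} log (u / k) / k` by `log² u / 2 + γ log u`;
in applications `n ≤ u ≤ n + 1`. -/
noncomputable def logHarmonicRemainder (n : ℕ) (u : ℝ) : ℝ :=
  Real.log u * harmonic n - ∑ k ∈ Ioc 0 n, Real.log k / k - Real.log u ^ 2 / 2 - γ * Real.log u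

theorem logHarmonicRemainder_eq_add (n : ℕ) (u : ℝ) :
    logHarmonicRemainder n u = logHarmonicRemainder n n + (Real.log u - Real.log n) *
      (harmonicRemainder n n - (Real.log u - Real.log n) / 2) := by
  unfold logHarmonicRemainder harmonicRemainder
  ring

theorem logHarmonicRemainder_succ_succ (n : ℕ) :
    logHarmonicRemainder (n + 1) (n + 1 : ℕ) = logHarmonicRemainder n (n + 1 : ℕ) := by
  unfold logHarmonicRemainder
  rw [sum_Ioc_succ_top n.zero_le, harmonic_succ]
  push_cast
  ring

theorem one_div_succ_mem {n : ℕ} (hn : 0 < n) :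
    0 < 1 / ((n : ℝ) + 1) ∧ 1 / ((n : ℝ) + 1) ≤ 1 / n ∧ 1 / (n : ℝ) ≤ 2 * (1 / (n + 1)) ∧
      1 / (n : ℝ) ≤ 1 := by
  have hn1 : (1 : ℝ) ≤ n := by exact_mod_cast hn
  refine ⟨by positivity, by gcongr; linarith, ?_, (div_le_one (by linarith)).2 hn1⟩
  rw [mul_one_div, div_le_div_iff₀ (by linarith) (by linarith)]
  linarith

theorem log_succ_sub_log_le {n : ℕ} (hn : 0 < n) :
    Real.log (n + 1) - Real.log n ≤ (1 / n + 1 / (n + 1)) / 2 := by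
  have h := (log_succ_sub_log_bounds hn).2
  obtain ⟨hy, hyx, -, hx⟩ := one_div_succ_mem hn
  simp only [← one_div_pow] at h
  set x := 1 / (n : ℝ)
  set y := 1 / ((n : ℝ) + 1)
  have : 0 ≤ (x ^ 2 - y ^ 2) * (2 - (x ^ 2 + y ^ 2)) :=
    mul_nonneg (by nlinarith) (by nlinarith)
  nlinarith

theorem half_log_succ_sub_log_le {n : ℕ} (hn : 0 < n) :
    (Real.log (n + 1) - Real.log n) / 2 ≤ harmonicRemainder n n := by
  have hh := (harmonicRemainder_self_bounds hn).1
  have hlog := log_succ_sub_log_le hn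
  have hxy : 1 / (n : ℝ) - 1 / (n + 1) = 1 / n * (1 / (n + 1)) := by field_simp; ring
  obtain ⟨-, hyx, hxy', -⟩ := one_div_succ_mem hn
  rw [show 1 / (2 * (n : ℝ)) = 1 / n / 2 by ring,
    show 1 / (12 * (n : ℝ) ^ 2) = (1 / n) ^ 2 / 12 by ring] at hh
  set x := 1 / (n : ℝ)
  set y := 1 / ((n : ℝ) + 1)
  nlinarith

theorem logHarmonicRemainder_step_le {n : ℕ} (hn : 0 < n) :
    (Real.log (n + 1) - Real.log n) *
        (harmonicRemainder n n - (Real.log (n + 1) - Real.log n) / 2) ≤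
      1 / (6 * (n : ℝ) ^ 2) - 1 / (6 * ((n : ℝ) + 1) ^ 2) := by
  have hh := harmonicRemainder_self_le hn
  have h0 := half_log_succ_sub_log_le hn
  have hlog := (log_succ_sub_log_bounds hn).1
  have hlog' := log_succ_sub_log_le hn
  obtain ⟨hy, hyx, -, hx⟩ := one_div_succ_mem hn
  have one_div_six_mul_sq (t : ℝ) : 1 / (6 * t ^ 2) = (1 / t) ^ 2 / 6 := by ring
  simp only [← one_div_pow] at hlog
  rw [show 1 / (2 * (n : ℝ)) = 1 / n / 2 by ring] at hh
  rw [one_div_six_mul_sq, one_div_six_mul_sq]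
  set x := 1 / (n : ℝ)
  set y := 1 / ((n : ℝ) + 1)
  set Δ := Real.log (n + 1) - Real.log n
  calc Δ * (harmonicRemainder n n - Δ / 2) ≤ (x + y) / 2 * ((x - y) / 3) :=
        mul_le_mul hlog' (by nlinarith) (by linarith) (by linarith)
    _ = x ^ 2 / 6 - y ^ 2 / 6 := by ring

theorem logHarmonicRemainder_self_le_succ {n : ℕ} (hn : 0 < n) :
    logHarmonicRemainder n n ≤ logHarmonicRemainder (n + 1) (n + 1 : ℕ) := by
  rw [logHarmonicRemainder_succ_succ, logHarmonicRemainder_eq_add n (n + 1 : ℕ)]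
  have hlog : Real.log n ≤ Real.log (n + 1) :=
    Real.log_le_log (by exact_mod_cast hn) (by linarith)
  push_cast
  exact le_add_of_nonneg_right
    (mul_nonneg (sub_nonneg.2 hlog) (sub_nonneg.2 (half_log_succ_sub_log_le hn)))

theorem logHarmonicRemainder_add_succ_le {n : ℕ} (hn : 0 < n) :
    logHarmonicRemainder (n + 1) (n + 1 : ℕ) + 1 / (6 * ((n + 1 : ℕ) : ℝ) ^ 2) ≤
      logHarmonicRemainder n n + 1 / (6 * (n : ℝ) ^ 2) := by
  rw [logHarmonicRemainder_succ_succ, logHarmonicRemainder_eq_add n (n + 1 : ℕ)]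
  push_cast
  linarith [logHarmonicRemainder_step_le hn]

theorem tendsto_log_mul_harmonicRemainder :
    Tendsto (fun n : ℕ => Real.log n * harmonicRemainder n n) atTop (𝓝 0) := by
  have hlog : Tendsto (fun n : ℕ => Real.log n ^ 1 / (n : ℝ) ^ 1) atTop (𝓝 0) :=
    (tendsto_log_pow_div_pow_atTop 1 one_ne_zero).comp tendsto_natCast_atTop_atTop
  refine squeeze_zero' ?_ ?_ hlog <;> filter_upwards [eventually_gt_atTop 0] with n hn
  · have hn1 : (1 : ℝ) ≤ n := by exact_mod_cast hn
    have : Real.log n ≤ Real.log (n + 1) := Real.log_le_log (by linarith) (by linarith)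
    exact mul_nonneg (Real.log_nonneg hn1) (by linarith [half_log_succ_sub_log_le hn])
  · have hn1 : (1 : ℝ) ≤ n := by exact_mod_cast hn
    have h : harmonicRemainder n n ≤ 1 / n :=
      (harmonicRemainder_self_le hn).trans (by gcongr; linarith)
    calc Real.log n * harmonicRemainder n n ≤ Real.log n * (1 / n) := by
          gcongr
      _ = Real.log n ^ 1 / (n : ℝ) ^ 1 := by ring

/-- The first Stieltjes constant `γ₁`. -/
noncomputable def stieltjesOne : ℝ :=
  limUnder atTop fun n : ℕ => ∑ k ∈ Ioc 0 n, Real.log k / k - Real.log n ^ 2 / 2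

theorem exists_tendsto_logHarmonicRemainder :
    ∃ l, Tendsto (fun n : ℕ => logHarmonicRemainder n n) atTop (𝓝 l) := by
  have hmono : Monotone fun n : ℕ => logHarmonicRemainder (n + 1) (n + 1 : ℕ) :=
    monotone_nat_of_le_succ fun n => logHarmonicRemainder_self_le_succ n.succ_pos
  have hanti : Antitone fun n : ℕ =>
      logHarmonicRemainder (n + 1) (n + 1 : ℕ) + 1 / (6 * ((n + 1 : ℕ) : ℝ) ^ 2) :=
    antitone_nat_of_succ_le fun n => logHarmonicRemainder_add_succ_le n.succ_pos
  have hbdd : BddAbove (Set.range fun n : ℕ => logHarmonicRemainder (n + 1) (n + 1 : ℕ)) := by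
    refine ⟨logHarmonicRemainder 1 (1 : ℕ) + 1 / (6 * ((1 : ℕ) : ℝ) ^ 2), ?_⟩
    rintro _ ⟨n, rfl⟩
    exact (le_add_of_nonneg_right (by positivity)).trans (hanti n.zero_le)
  exact ⟨_, (tendsto_add_atTop_iff_nat 1).1 (tendsto_atTop_ciSup hmono hbdd)⟩

theorem sum_log_div_sub_eq (n : ℕ) :
    ∑ k ∈ Ioc 0 n, Real.log k / k - Real.log n ^ 2 / 2 =
      Real.log n * harmonicRemainder n n - logHarmonicRemainder n n := by
  unfold harmonicRemainder logHarmonicRemainder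
  ring

theorem tendsto_stieltjesOne :
    Tendsto (fun n : ℕ => ∑ k ∈ Ioc 0 n, Real.log k / k - Real.log n ^ 2 / 2) atTop
      (𝓝 stieltjesOne) := by
  obtain ⟨l, hl⟩ := exists_tendsto_logHarmonicRemainder
  refine tendsto_nhds_limUnder ⟨0 - l, ?_⟩
  simpa only [sum_log_div_sub_eq] using tendsto_log_mul_harmonicRemainder.sub hl

theorem tendsto_logHarmonicRemainder :
    Tendsto (fun n : ℕ => logHarmonicRemainder n n) atTop (𝓝 (-stieltjesOne)) := by
  simpa [sum_log_div_sub_eq] using tendsto_log_mul_harmonicRemainder.sub tendsto_stieltjesOne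

theorem neg_stieltjesOne_bounds {n : ℕ} (hn : 0 < n) :
    logHarmonicRemainder n n ≤ -stieltjesOne ∧
      -stieltjesOne ≤ logHarmonicRemainder n n + 1 / (6 * (n : ℝ) ^ 2) := by
  have hsq : Tendsto (fun k : ℕ => 1 / (6 * (k : ℝ) ^ 2)) atTop (𝓝 0) :=
    (((tendsto_pow_atTop two_ne_zero).comp tendsto_natCast_atTop_atTop).const_mul_atTop
      (by norm_num : (0 : ℝ) < 6)).const_div_atTop 1
  have hadd := tendsto_logHarmonicRemainder.add hsq
  rw [add_zero] at hadd
  constructor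
  · exact ge_of_tendsto_of_le_succ (s := fun k : ℕ => logHarmonicRemainder k k)
      (fun k hk => logHarmonicRemainder_self_le_succ (hn.trans_le hk)) tendsto_logHarmonicRemainder
  · exact le_of_tendsto_of_succ_le
      (s := fun k : ℕ => logHarmonicRemainder k k + 1 / (6 * (k : ℝ) ^ 2))
      (fun k hk => logHarmonicRemainder_add_succ_le (hn.trans_le hk)) hadd

theorem abs_logHarmonicRemainder_floor_add_stieltjesOne_le {u : ℝ} (hu : 1 ≤ u) :
    |logHarmonicRemainder ⌊u⌋₊ u + stieltjesOne| ≤ 1 / (6 * (⌊u⌋₊ : ℝ) ^ 2) := by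
  have hn : 0 < ⌊u⌋₊ := Nat.floor_pos.2 hu
  have hnu := Nat.floor_le (zero_le_one.trans hu)
  have hun := Nat.lt_floor_add_one u
  generalize ⌊u⌋₊ = n at hn hnu hun ⊢
  have hn0 : (0 : ℝ) < n := by exact_mod_cast hn
  obtain ⟨lower, upper⟩ := neg_stieltjesOne_bounds hn
  rw [logHarmonicRemainder_eq_add]
  have hs : 0 ≤ Real.log u - Real.log n := sub_nonneg.2 (Real.log_le_log hn0 hnu)
  have hsh : (Real.log u - Real.log n) / 2 ≤ harmonicRemainder n n := by
    have : Real.log u ≤ Real.log (n + 1) := Real.log_le_log (by linarith) hun.le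
    linarith [half_log_succ_sub_log_le hn]
  generalize Real.log u - Real.log n = s at hs hsh ⊢
  have hh := harmonicRemainder_self_le hn
  generalize harmonicRemainder n n = h at hsh hh ⊢
  have hh2 : h ^ 2 ≤ 1 / (4 * (n : ℝ) ^ 2) := by
    calc h ^ 2 ≤ (1 / (2 * n)) ^ 2 := pow_le_pow_left₀ (by linarith) hh 2
      _ = 1 / (4 * (n : ℝ) ^ 2) := by ring
  have nonneg : 0 ≤ s * (h - s / 2) := mul_nonneg hs (by linarith)
  have le_sq : s * (h - s / 2) ≤ h ^ 2 / 2 := by linarith [sq_nonneg (s - h)]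
  have hsixth : 1 / (6 * (n : ℝ) ^ 2) = 4 / 6 * (1 / (4 * (n : ℝ) ^ 2)) := by ring
  rw [abs_le]
  constructor <;> linarith [sq_nonneg h]

end Stieltjes

section Hyperbola

/-- The restriction of an arithmetic function to `n ≤ m`. -/
def truncateAbove {R : Type*} [Zero R] (f : ArithmeticFunction R) (m : ℕ) : ArithmeticFunction R :=
  ⟨fun n => if n ≤ m then f n else 0, by simp⟩

variable {R : Type*} [CommRing R]

theorem truncateAbove_apply (f : ArithmeticFunction R) (m n : ℕ) :
    truncateAbove f m n = if n ≤ m then f n else 0 := rfl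

theorem sum_truncateAbove_mul (f : ArithmeticFunction R) (g : ℕ → R) {m N : ℕ} (h : m ≤ N) :
    ∑ n ∈ Ioc 0 N, truncateAbove f m n * g n = ∑ n ∈ Ioc 0 m, f n * g n := by
  simp only [truncateAbove_apply, ite_mul, zero_mul, ← sum_filter]
  congr 1
  ext n
  simp only [mem_filter, mem_Ioc]
  omega

theorem sum_truncateAbove_mul_truncateAbove (f g : ArithmeticFunction R) (N : ℕ) :
    ∑ n ∈ Ioc 0 N, (truncateAbove f N.sqrt * truncateAbove g N.sqrt) n =
      (∑ n ∈ Ioc 0 N.sqrt, f n) * ∑ n ∈ Ioc 0 N.sqrt, g n := by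
  rw [ArithmeticFunction.sum_Ioc_mul_eq_sum_sum, sum_truncateAbove_mul _ _ N.sqrt_le_self, sum_mul]
  refine sum_congr rfl fun a ha => ?_
  obtain ⟨ha0, ham⟩ := mem_Ioc.1 ha
  have hle : N.sqrt ≤ N / a :=
    (Nat.le_div_iff_mul_le ha0).2 ((Nat.mul_le_mul_left _ ham).trans N.sqrt_le)
  simpa using congrArg (f a * ·) (sum_truncateAbove_mul g 1 hle)

theorem sum_sub_truncateAbove_mul (f g : ArithmeticFunction R) (N : ℕ) :
    ∑ n ∈ Ioc 0 N, ((f - truncateAbove f N.sqrt) * (g - truncateAbove g N.sqrt)) n = 0 := by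
  rw [ArithmeticFunction.sum_Ioc_mul_eq_sum_prod_filter]
  refine sum_eq_zero fun x hx => ?_
  simp only [sub_eq_add_neg, ArithmeticFunction.add_apply, ArithmeticFunction.neg_apply,
    truncateAbove_apply]
  by_cases h1 : x.1 ≤ N.sqrt
  · simp [h1]
  · by_cases h2 : x.2 ≤ N.sqrt
    · simp [h2]
    · have := Nat.mul_le_mul (not_le.1 h1) (not_le.1 h2)
      have := N.lt_succ_sqrt
      have := (mem_filter.1 hx).2
      omega

theorem sum_mul_eq_hyperbola (f g : ArithmeticFunction R) (N : ℕ) :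
    ∑ n ∈ Ioc 0 N, (f * g) n =
      ∑ a ∈ Ioc 0 N.sqrt, f a * ∑ b ∈ Ioc 0 (N / a), g b +
        ∑ b ∈ Ioc 0 N.sqrt, g b * ∑ a ∈ Ioc 0 (N / b), f a -
          (∑ a ∈ Ioc 0 N.sqrt, f a) * ∑ b ∈ Ioc 0 N.sqrt, g b := by
  set f' := truncateAbove f N.sqrt
  set g' := truncateAbove g N.sqrt
  have split : f * g = f' * g + g' * f + -(f' * g') + (f - f') * (g - g') := by ring
  simp only [split, ArithmeticFunction.add_apply, ArithmeticFunction.neg_apply, sum_add_distrib,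
    sum_neg_distrib]
  rw [sum_sub_truncateAbove_mul, sum_truncateAbove_mul_truncateAbove,
    ArithmeticFunction.sum_Ioc_mul_eq_sum_sum, ArithmeticFunction.sum_Ioc_mul_eq_sum_sum,
    sum_truncateAbove_mul f _ N.sqrt_le_self, sum_truncateAbove_mul g _ N.sqrt_le_self]
  ring

end Hyperbola

section DivisorSum

/-- The arithmetic function `n ↦ 1 / n`. -/
noncomputable def recip : ArithmeticFunction ℝ := ⟨fun n => 1 / n, by simp⟩

theorem recip_apply (n : ℕ) : recip n = 1 / n := rfl

theorem sum_recip (n : ℕ) : ∑ k ∈ Ioc 0 n, recip k = harmonic n := (harmonic_eq_sum_Ioc n).symm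

theorem sum_recip_mul_recip (N : ℕ) :
    ∑ n ∈ Ioc 0 N, (recip * recip) n =
      2 * ∑ a ∈ Ioc 0 N.sqrt, 1 / (a : ℝ) * harmonic (N / a) - (harmonic N.sqrt : ℝ) ^ 2 := by
  rw [sum_mul_eq_hyperbola]
  simp only [sum_recip]
  simp only [recip_apply]
  ring

/-- The main term of `∑_{ab ≤ u²} 1 / (ab)`. -/
noncomputable def divisorMainTerm (u : ℝ) : ℝ :=
  2 * Real.log u ^ 2 + 4 * γ * Real.log u + (γ ^ 2 - 2 * stieltjesOne)

theorem sqrt_floor_sq {u : ℝ} (hu : 0 ≤ u) : Nat.sqrt ⌊u ^ 2⌋₊ = ⌊u⌋₊ := by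
  refine (Nat.eq_sqrt'.2 ⟨Nat.le_floor ?_, (Nat.floor_lt (by positivity)).2 ?_⟩).symm
  · push_cast
    exact pow_le_pow_left₀ (by positivity) (Nat.floor_le hu) 2
  · push_cast
    exact pow_lt_pow_left₀ (Nat.lt_floor_add_one u) hu two_ne_zero

theorem sum_harmonic_div_eq (N m : ℕ) {u : ℝ} (hu : 0 < u) :
    ∑ a ∈ Ioc 0 m, 1 / (a : ℝ) * harmonic (N / a) =
      (2 * Real.log u + γ) * harmonic m - ∑ k ∈ Ioc 0 m, Real.log k / k +
        ∑ a ∈ Ioc 0 m, 1 / (a : ℝ) * harmonicRemainder (N / a) (u ^ 2 / a) := by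
  rw [harmonic_eq_sum_Ioc m, mul_sum, ← sum_sub_distrib, ← sum_add_distrib]
  refine sum_congr rfl fun a ha => ?_
  have ha0 : (0 : ℝ) < a := Nat.cast_pos.2 (mem_Ioc.1 ha).1
  rw [harmonicRemainder, Real.log_div (by positivity) (by positivity), Real.log_pow]
  push_cast
  ring

theorem sum_Ioc_cast (m : ℕ) : ∑ a ∈ Ioc 0 m, (a : ℝ) = m * (m + 1) / 2 := by
  induction m with
  | zero => simp
  | succ k ih =>
    rw [sum_Ioc_succ_top k.zero_le, ih]
    push_cast
    ring

theorem abs_sum_harmonicRemainder_div_le {u : ℝ} (hu : 1 ≤ u) :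
    |∑ a ∈ Ioc 0 ⌊u⌋₊, 1 / (a : ℝ) * harmonicRemainder (⌊u ^ 2⌋₊ / a) (u ^ 2 / a)| ≤
      ⌊u⌋₊ / (2 * u ^ 2) + ⌊u⌋₊ * (⌊u⌋₊ + 1) / (24 * u ^ 4) := by
  have term_le (a : ℕ) (ha : a ∈ Ioc 0 ⌊u⌋₊) :
      |1 / (a : ℝ) * harmonicRemainder (⌊u ^ 2⌋₊ / a) (u ^ 2 / a)| ≤
        1 / (2 * u ^ 2) + a / (12 * u ^ 4) := by
    obtain ⟨ha0, ham⟩ := mem_Ioc.1 ha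
    have ha0' : (0 : ℝ) < a := Nat.cast_pos.2 ha0
    have hau : (a : ℝ) ≤ u := (Nat.le_floor_iff (by positivity)).1 ham
    have h1 : 1 ≤ u ^ 2 / a := by
      rw [le_div_iff₀ ha0']
      nlinarith
    have h := abs_harmonicRemainder_floor_le h1
    rw [Nat.floor_div_natCast] at h
    rw [abs_mul, abs_of_pos (by positivity)]
    calc 1 / (a : ℝ) * |harmonicRemainder (⌊u ^ 2⌋₊ / a) (u ^ 2 / a)| ≤
          1 / a * (1 / (2 * (u ^ 2 / a)) + 1 / (12 * (u ^ 2 / a) ^ 2)) := by gcongr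
      _ = 1 / (2 * u ^ 2) + a / (12 * u ^ 4) := by field_simp
  calc _ ≤ ∑ a ∈ Ioc 0 ⌊u⌋₊, (1 / (2 * u ^ 2) + (a : ℝ) / (12 * u ^ 4)) :=
        (abs_sum_le_sum_abs _ _).trans (sum_le_sum term_le)
    _ = ⌊u⌋₊ / (2 * u ^ 2) + ⌊u⌋₊ * (⌊u⌋₊ + 1) / (24 * u ^ 4) := by
        rw [sum_add_distrib, ← sum_div _ (fun a : ℕ => (a : ℝ)), sum_Ioc_cast]
        simp only [sum_const, Nat.card_Ioc, Nat.sub_zero, nsmul_eq_mul]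
        ring

theorem harmonicRemainder_floor_sq_le {u : ℝ} (hu : 1 ≤ u) :
    harmonicRemainder ⌊u⌋₊ u ^ 2 ≤ 49 / 144 / u ^ 2 := by
  have h : |harmonicRemainder ⌊u⌋₊ u| ≤ 7 / 12 / u := by
    have : 1 / (12 * u ^ 2) ≤ 1 / (12 * u) := by
      gcongr
      nlinarith
    calc _ ≤ 1 / (2 * u) + 1 / (12 * u) := by linarith [abs_harmonicRemainder_floor_le hu]
      _ = 7 / 12 / u := by ring
  calc _ = |harmonicRemainder ⌊u⌋₊ u| ^ 2 := (sq_abs _).symm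
    _ ≤ (7 / 12 / u) ^ 2 := pow_le_pow_left₀ (abs_nonneg _) h 2
    _ = 49 / 144 / u ^ 2 := by ring

theorem hyperbola_error_le {m u : ℝ} (hm : 1 ≤ m) (hmu : m ≤ u) (hum : u ≤ m + 1) :
    2 * (m / (2 * u ^ 2) + m * (m + 1) / (24 * u ^ 4)) + 2 * (1 / (6 * m ^ 2)) + 49 / 144 / u ^ 2 ≤
      1 / u + 17 / 20 / u ^ 2 := by
  obtain ⟨ρ, rfl⟩ : ∃ ρ, u = m * ρ := ⟨u / m, by field_simp⟩
  have hρ1 : 1 ≤ ρ := by nlinarith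
  have hρ2 : ρ ≤ 2 := by nlinarith
  have small : m * (m + 1) / (24 * (m * ρ) ^ 4) ≤ 1 / 12 / (m * ρ) ^ 2 := by
    rw [div_le_div_iff₀ (by positivity) (by positivity)]
    have : m * (m + 1) ≤ 2 * (m * ρ) ^ 2 := by nlinarith
    nlinarith [mul_le_mul_of_nonneg_right this (by positivity : 0 ≤ (m * ρ) ^ 2)]
  have key : m + 1 / 6 + ρ ^ 2 / 3 + 49 / 144 ≤ m * ρ + 17 / 20 := by
    nlinarith [mul_nonneg (sub_nonneg.2 hm) (sub_nonneg.2 hρ1),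
      mul_nonneg (sub_nonneg.2 hρ1) (sub_nonneg.2 hρ2)]
  calc _ ≤ 2 * (m / (2 * (m * ρ) ^ 2) + 1 / 12 / (m * ρ) ^ 2) + 2 * (1 / (6 * m ^ 2)) +
        49 / 144 / (m * ρ) ^ 2 := by gcongr
    _ = (m + 1 / 6 + ρ ^ 2 / 3 + 49 / 144) / (m * ρ) ^ 2 := by
        field_simp
        ring
    _ ≤ (m * ρ + 17 / 20) / (m * ρ) ^ 2 := by gcongr
    _ = 1 / (m * ρ) + 17 / 20 / (m * ρ) ^ 2 := by field_simp

theorem abs_sum_recip_mul_recip_sub_le {u : ℝ} (hu : 1 ≤ u) :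
    |∑ n ∈ Ioc 0 ⌊u ^ 2⌋₊, (recip * recip) n - divisorMainTerm u| ≤ 1 / u + 17 / 20 / u ^ 2 := by
  have hu0 : 0 < u := by linarith
  have decomposition : ∑ n ∈ Ioc 0 ⌊u ^ 2⌋₊, (recip * recip) n - divisorMainTerm u =
      2 * ∑ a ∈ Ioc 0 ⌊u⌋₊, 1 / (a : ℝ) * harmonicRemainder (⌊u ^ 2⌋₊ / a) (u ^ 2 / a) +
        2 * (logHarmonicRemainder ⌊u⌋₊ u + stieltjesOne) - harmonicRemainder ⌊u⌋₊ u ^ 2 := by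
    rw [sum_recip_mul_recip, sqrt_floor_sq hu0.le, sum_harmonic_div_eq _ _ hu0]
    unfold divisorMainTerm logHarmonicRemainder harmonicRemainder
    ring
  have hS := abs_sum_harmonicRemainder_div_le hu
  have hr := abs_logHarmonicRemainder_floor_add_stieltjesOne_le hu
  have hh := harmonicRemainder_floor_sq_le hu
  have hm : (1 : ℝ) ≤ ⌊u⌋₊ := by exact_mod_cast Nat.floor_pos.2 hu
  have herr := hyperbola_error_le hm (Nat.floor_le hu0.le) (Nat.lt_floor_add_one u).le
  rw [decomposition]
  rw [abs_le] at hS hr ⊢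
  have hh0 := sq_nonneg (harmonicRemainder ⌊u⌋₊ u)
  constructor <;> linarith

end DivisorSum

section Convolution

/-- The arithmetic function `n ↦ 2 ^ ω(n) / n`. -/
noncomputable def twoPowOmegaDiv : ArithmeticFunction ℝ :=
  ⟨fun n => (2 : ℝ) ^ n.primeFactors.card / n, by simp⟩

/-- The arithmetic function supported on squares with `k ^ 2 ↦ μ(k) / k ^ 2`. -/
noncomputable def moebiusSqDiv : ArithmeticFunction ℝ :=
  ⟨fun n => if IsSquare n then (moebius n.sqrt : ℝ) / n else 0, by simp⟩

theorem twoPowOmegaDiv_apply (n : ℕ) :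
    twoPowOmegaDiv n = (2 : ℝ) ^ n.primeFactors.card / n := rfl

theorem moebiusSqDiv_sq (k : ℕ) : moebiusSqDiv (k ^ 2) = (moebius k : ℝ) / (k : ℝ) ^ 2 := by
  rw [moebiusSqDiv, ArithmeticFunction.coe_mk, if_pos (IsSquare.sq k), Nat.sqrt_eq', Nat.cast_pow]

theorem moebiusSqDiv_of_not_isSquare {n : ℕ} (h : ¬ IsSquare n) : moebiusSqDiv n = 0 :=
  if_neg h

theorem isMultiplicative_recip : recip.IsMultiplicative := by
  refine ⟨by simp [recip_apply], fun {m n} _ => ?_⟩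
  simp only [recip_apply, Nat.cast_mul, one_div_mul_one_div]

theorem isMultiplicative_twoPowOmegaDiv : twoPowOmegaDiv.IsMultiplicative := by
  refine ⟨by simp [twoPowOmegaDiv_apply], fun {m n} h => ?_⟩
  rw [twoPowOmegaDiv_apply, h.primeFactors_mul, card_union_of_disjoint h.disjoint_primeFactors,
    pow_add, Nat.cast_mul, ← div_mul_div_comm, twoPowOmegaDiv_apply, twoPowOmegaDiv_apply]

theorem isMultiplicative_moebiusSqDiv : moebiusSqDiv.IsMultiplicative := by
  refine ⟨by simpa using moebiusSqDiv_sq 1, fun {m n} h => ?_⟩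
  by_cases hmn : IsSquare (m * n)
  · obtain ⟨c, hc⟩ := (isSquare_iff_exists_sq _).1 hmn
    obtain ⟨a, rfl⟩ := exists_eq_pow_of_mul_eq_pow (Nat.isUnit_iff.2 h) hc
    obtain ⟨b, rfl⟩ := exists_eq_pow_of_mul_eq_pow (Nat.isUnit_iff.2 h.symm)
      ((mul_comm _ _).trans hc)
    have hab : a.Coprime b := by
      rwa [Nat.coprime_pow_left_iff two_pos, Nat.coprime_pow_right_iff two_pos] at h
    rw [← mul_pow, moebiusSqDiv_sq, moebiusSqDiv_sq, moebiusSqDiv_sq,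
      ArithmeticFunction.isMultiplicative_moebius.map_mul_of_coprime hab]
    push_cast
    ring
  · rw [moebiusSqDiv_of_not_isSquare hmn]
    by_cases hm : IsSquare m
    · rw [moebiusSqDiv_of_not_isSquare fun hn => hmn (hm.mul hn), mul_zero]
    · rw [moebiusSqDiv_of_not_isSquare hm, zero_mul]

theorem convolution_apply_prime_pow {R : Type*} [Semiring R] (f g : ArithmeticFunction R) {p : ℕ}
    (hp : p.Prime) (k : ℕ) :
    (f * g) (p ^ k) = ∑ i ∈ range (k + 1), f (p ^ i) * g (p ^ (k - i)) := by
  rw [ArithmeticFunction.mul_apply, Nat.sum_divisorsAntidiagonal fun i j => f i * g j,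
    Nat.sum_divisors_prime_pow hp]
  refine sum_congr rfl fun i hi => ?_
  rw [Nat.pow_div (Nat.lt_succ_iff.1 (mem_range.1 hi)) hp.pos]

theorem recip_mul_recip_prime_pow {p : ℕ} (hp : p.Prime) (k : ℕ) :
    (recip * recip) (p ^ k) = (k + 1) / (p : ℝ) ^ k := by
  have term_eq (i : ℕ) (hi : i ∈ range (k + 1)) :
      recip (p ^ i) * recip (p ^ (k - i)) = 1 / (p : ℝ) ^ k := by
    rw [recip_apply, recip_apply, one_div_mul_one_div, ← Nat.cast_mul, ← pow_add,
      Nat.add_sub_cancel' (Nat.lt_succ_iff.1 (mem_range.1 hi)), Nat.cast_pow]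
  rw [convolution_apply_prime_pow _ _ hp, sum_congr rfl term_eq, sum_const, card_range,
    nsmul_eq_mul, mul_one_div, Nat.cast_succ]

theorem moebiusSqDiv_prime_pow {p : ℕ} (hp : p.Prime) {i : ℕ} (h0 : i ≠ 0) (h2 : i ≠ 2) :
    moebiusSqDiv (p ^ i) = 0 := by
  by_cases h : IsSquare (p ^ i)
  · obtain ⟨c, hc⟩ := (isSquare_iff_exists_sq _).1 h
    obtain ⟨j, -, rfl⟩ := (Nat.dvd_prime_pow hp).1 (hc ▸ dvd_pow_self c two_ne_zero)
    have hij : i = j * 2 := Nat.pow_right_injective hp.two_le (hc.trans (pow_mul p j 2).symm)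
    rw [hc, moebiusSqDiv_sq, ArithmeticFunction.moebius_apply_prime_pow hp (by omega),
      if_neg (by omega), Int.cast_zero, zero_div]
  · exact moebiusSqDiv_of_not_isSquare h

theorem moebiusSqDiv_mul_recip_mul_recip_prime_pow {p : ℕ} (hp : p.Prime) (k : ℕ) :
    (moebiusSqDiv * (recip * recip)) (p ^ (k + 2)) = 2 / (p : ℝ) ^ (k + 2) := by
  have hp0 : (p : ℝ) ≠ 0 := Nat.cast_ne_zero.2 hp.ne_zero
  rw [convolution_apply_prime_pow _ _ hp, sum_eq_add_of_mem 0 2 (by simp) (by simp) (by norm_num)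
    fun i _ hi => by rw [moebiusSqDiv_prime_pow hp hi.1 hi.2, zero_mul],
    recip_mul_recip_prime_pow hp, recip_mul_recip_prime_pow hp, pow_zero,
    isMultiplicative_moebiusSqDiv.map_one, moebiusSqDiv_sq,
    ArithmeticFunction.moebius_apply_prime hp]
  simp only [Nat.sub_zero, Nat.add_sub_cancel]
  push_cast
  field_simp
  ring

theorem twoPowOmegaDiv_eq : twoPowOmegaDiv = moebiusSqDiv * (recip * recip) := by
  have hprod := isMultiplicative_moebiusSqDiv.mul
    (isMultiplicative_recip.mul isMultiplicative_recip)
  refine (isMultiplicative_twoPowOmegaDiv.eq_iff_eq_on_prime_powers _ _ hprod).2 fun p k hp => ?_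
  rcases k with _ | _ | k
  · rw [pow_zero, isMultiplicative_twoPowOmegaDiv.map_one, hprod.map_one]
  · rw [convolution_apply_prime_pow _ _ hp, zero_add, sum_range_succ, sum_range_one, pow_zero,
      isMultiplicative_moebiusSqDiv.map_one, moebiusSqDiv_prime_pow hp one_ne_zero (by norm_num),
      recip_mul_recip_prime_pow hp, twoPowOmegaDiv_apply, pow_one, hp.primeFactors]
    norm_num
  · rw [moebiusSqDiv_mul_recip_mul_recip_prime_pow hp, twoPowOmegaDiv_apply,
      Nat.primeFactors_prime_pow (by omega) hp, card_singleton, pow_one, Nat.cast_pow]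

theorem sum_moebiusSqDiv_mul (N : ℕ) (g : ℕ → ℝ) :
    ∑ n ∈ Ioc 0 N, moebiusSqDiv n * g n =
      ∑ k ∈ Ioc 0 N.sqrt, (moebius k : ℝ) / (k : ℝ) ^ 2 * g (k ^ 2) := by
  have hinj : Set.InjOn (fun k : ℕ => k ^ 2) (Ioc 0 N.sqrt) := fun a _ b _ h => by simpa using h
  rw [← sum_subset (s₁ := (Ioc 0 N.sqrt).image fun k => k ^ 2), sum_image hinj]
  · exact sum_congr rfl fun k _ => by rw [moebiusSqDiv_sq]
  · intro n hn
    obtain ⟨k, hk, rfl⟩ := mem_image.1 hn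
    rw [mem_Ioc] at hk ⊢
    exact ⟨pow_pos hk.1 2, Nat.le_sqrt'.1 hk.2⟩
  · intro n hn hn'
    rw [moebiusSqDiv_of_not_isSquare, zero_mul]
    rintro ⟨k, rfl⟩
    obtain ⟨h0, hN⟩ := mem_Ioc.1 hn
    exact hn' (mem_image.2 ⟨k, mem_Ioc.2 ⟨Nat.pos_of_mul_pos_left h0, Nat.le_sqrt.2 hN⟩, sq k⟩)

theorem sum_twoPowOmegaDiv (N : ℕ) :
    ∑ n ∈ Ioc 0 N, twoPowOmegaDiv n = ∑ k ∈ Ioc 0 N.sqrt,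
      (moebius k : ℝ) / (k : ℝ) ^ 2 * ∑ n ∈ Ioc 0 (N / k ^ 2), (recip * recip) n := by
  rw [twoPowOmegaDiv_eq, ArithmeticFunction.sum_Ioc_mul_eq_sum_sum, sum_moebiusSqDiv_mul]

end Convolution

section LogDirichletSum

open LSeries (logMul abscissaOfAbsConv)

/-- The sum `∑ f(n) log(n) ^ j / n ^ 2`, that is `(-1) ^ j` times the `j`-th derivative at `2` of
the Dirichlet series of `f`. -/
noncomputable def logDirichletSum (f : ℕ → ℝ) (j : ℕ) : ℝ :=
  ∑' n : ℕ, f n * Real.log n ^ j / (n : ℝ) ^ 2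

theorem LSeries_term_logMul_iterate_two (f : ℕ → ℝ) (j n : ℕ) :
    LSeries.term (logMul^[j] fun n => (f n : ℂ)) 2 n =
      ((f n * Real.log n ^ j / (n : ℝ) ^ 2 : ℝ) : ℂ) := by
  have iterate_apply : logMul^[j] (fun n => (f n : ℂ)) n = Complex.log n ^ j * f n := by
    induction j with
    | zero => simp
    | succ i ih => rw [Function.iterate_succ_apply', logMul, ih, pow_succ', mul_assoc]
  rcases eq_or_ne n 0 with rfl | hn
  · simp
  · rw [LSeries.term_of_ne_zero hn, iterate_apply, ← Complex.natCast_log, mul_comm]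
    norm_cast

theorem LSeries_logMul_iterate_two (f : ℕ → ℝ) (j : ℕ) :
    LSeries (logMul^[j] fun n => (f n : ℂ)) 2 = (logDirichletSum f j : ℂ) := by
  rw [LSeries, logDirichletSum, Complex.ofReal_tsum]
  exact tsum_congr (LSeries_term_logMul_iterate_two f j)

theorem hasSum_logDirichletSum {f : ℕ → ℝ}
    (hf : abscissaOfAbsConv (fun n => (f n : ℂ)) < 2) (j : ℕ) :
    HasSum (fun n : ℕ => f n * Real.log n ^ j / (n : ℝ) ^ 2) (logDirichletSum f j) := by
  have h : LSeriesSummable (logMul^[j] fun n => (f n : ℂ)) 2 :=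
    LSeriesSummable_of_abscissaOfAbsConv_lt_re (by
      rw [LSeries.absicssaOfAbsConv_logPowMul]
      exact_mod_cast hf)
  refine Summable.hasSum (Complex.summable_ofReal.1 ?_)
  exact h.congr fun n => LSeries_term_logMul_iterate_two f j n

theorem hasDerivAt_LSeries_mul {f g : ℕ → ℂ} {s : ℂ} (hf : abscissaOfAbsConv f < s.re)
    (hg : abscissaOfAbsConv g < s.re) :
    HasDerivAt (LSeries f * LSeries g)
      (-(LSeries (logMul f) s * LSeries g s + LSeries f s * LSeries (logMul g) s)) s :=
  ((LSeries_hasDerivAt hf).mul (LSeries_hasDerivAt hg)).congr_deriv (by ring)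

local notation "μ" => fun n : ℕ => ((moebius n : ℝ) : ℂ)

theorem abscissaOfAbsConv_moebius_ofReal : abscissaOfAbsConv μ = 1 := by
  simpa only [Complex.ofReal_intCast] using ArithmeticFunction.abscissaOfAbsConv_moebius

theorem LSeries_one_mul_LSeries_moebius_ofReal {s : ℂ} (hs : 1 < s.re) :
    LSeries 1 s * LSeries μ s = 1 := by
  simpa only [Complex.ofReal_intCast] using
    _root_.LSeries_one_mul_Lseries_moebius hs

theorem eventuallyEq_nhds_of_one_lt_re {F G : ℂ → ℂ} (h : ∀ z : ℂ, 1 < z.re → F z = G z) {s : ℂ}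
    (hs : 1 < s.re) : F =ᶠ[𝓝 s] G :=
  eventually_of_mem ((isOpen_lt continuous_const Complex.continuous_re).mem_nhds hs) h

theorem LSeries_one_moebius_deriv {s : ℂ} (hs : 1 < s.re) :
    LSeries (logMul 1) s * LSeries μ s + LSeries 1 s * LSeries (logMul μ) s = 0 := by
  have hs' : (1 : EReal) < s.re := by exact_mod_cast hs
  have hderiv : HasDerivAt (LSeries 1 * LSeries μ) _ s :=
    hasDerivAt_LSeries_mul (LSeries.abscissaOfAbsConv_one.trans_lt hs')
      (abscissaOfAbsConv_moebius_ofReal.trans_lt hs')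
  refine neg_eq_zero.1 (hderiv.unique ((hasDerivAt_const s (1 : ℂ)).congr_of_eventuallyEq ?_))
  exact eventuallyEq_nhds_of_one_lt_re (fun z hz => LSeries_one_mul_LSeries_moebius_ofReal hz) hs

theorem LSeries_one_moebius_deriv_deriv {s : ℂ} (hs : 1 < s.re) :
    LSeries (logMul (logMul 1)) s * LSeries μ s +
      2 * (LSeries (logMul 1) s * LSeries (logMul μ) s) +
      LSeries 1 s * LSeries (logMul (logMul μ)) s = 0 := by
  have hs' : (1 : EReal) < s.re := by exact_mod_cast hs
  have h1 := LSeries.abscissaOfAbsConv_one.trans_lt hs'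
  have hμ := abscissaOfAbsConv_moebius_ofReal.trans_lt hs'
  have hderiv := (hasDerivAt_LSeries_mul (LSeries.abscissaOfAbsConv_logMul.trans_lt h1) hμ).add
    (hasDerivAt_LSeries_mul h1 (LSeries.abscissaOfAbsConv_logMul.trans_lt hμ))
  have hzero := hderiv.unique ((hasDerivAt_const s (0 : ℂ)).congr_of_eventuallyEq
    (eventuallyEq_nhds_of_one_lt_re (fun z hz => LSeries_one_moebius_deriv hz) hs))
  linear_combination -hzero

end LogDirichletSum

section MoebiusLogSum

local notation "μ" => fun n : ℕ => (moebius n : ℝ)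

theorem hasSum_logDirichletSum_one (j : ℕ) :
    HasSum (fun n : ℕ => Real.log n ^ j / (n : ℝ) ^ 2) (logDirichletSum 1 j) := by
  have h := hasSum_logDirichletSum (f := 1) (by
    have : (fun n : ℕ => (((1 : ℕ → ℝ) n : ℝ) : ℂ)) = 1 := by ext; simp
    rw [this, LSeries.abscissaOfAbsConv_one]
    exact_mod_cast one_lt_two) j
  simpa only [Pi.one_apply, one_mul] using h

theorem hasSum_logDirichletSum_moebius (j : ℕ) :
    HasSum (fun n : ℕ => (moebius n : ℝ) * Real.log n ^ j / (n : ℝ) ^ 2) (logDirichletSum μ j) :=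
  hasSum_logDirichletSum
    (abscissaOfAbsConv_moebius_ofReal.trans_lt (by exact_mod_cast one_lt_two)) j

theorem LSeries_logMul_iterate_one_two (j : ℕ) :
    LSeries (LSeries.logMul^[j] 1) 2 = (logDirichletSum 1 j : ℂ) := by
  rw [← LSeries_logMul_iterate_two]
  simp only [Pi.one_apply, Complex.ofReal_one]
  rfl

theorem logDirichletSum_one_zero : logDirichletSum 1 0 = Real.pi ^ 2 / 6 := by
  simpa [logDirichletSum] using hasSum_zeta_two.tsum_eq

theorem logDirichletSum_moebius_zero : logDirichletSum μ 0 = 6 / Real.pi ^ 2 := by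
  have h : (logDirichletSum 1 0 * logDirichletSum μ 0 : ℂ) = 1 := by
    simp only [← LSeries_logMul_iterate_one_two]
    simp only [← LSeries_logMul_iterate_two]
    exact LSeries_one_mul_LSeries_moebius_ofReal (by norm_num)
  norm_cast at h
  rw [logDirichletSum_one_zero] at h
  field_simp at h ⊢
  linarith

theorem logDirichletSum_moebius_one :
    logDirichletSum μ 1 = -logDirichletSum 1 1 * (6 / Real.pi ^ 2) ^ 2 := by
  have h : (logDirichletSum 1 1 * logDirichletSum μ 0 +
      logDirichletSum 1 0 * logDirichletSum μ 1 : ℂ) = 0 := by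
    simp only [← LSeries_logMul_iterate_one_two]
    simp only [← LSeries_logMul_iterate_two]
    exact LSeries_one_moebius_deriv (by norm_num)
  norm_cast at h
  rw [logDirichletSum_one_zero, logDirichletSum_moebius_zero] at h
  field_simp at h ⊢
  linarith

theorem logDirichletSum_moebius_two :
    logDirichletSum μ 2 = -logDirichletSum 1 2 * (6 / Real.pi ^ 2) ^ 2 +
      2 * logDirichletSum 1 1 ^ 2 * (6 / Real.pi ^ 2) ^ 3 := by
  have h : (logDirichletSum 1 2 * logDirichletSum μ 0 +
      2 * (logDirichletSum 1 1 * logDirichletSum μ 1) +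
      logDirichletSum 1 0 * logDirichletSum μ 2 : ℂ) = 0 := by
    simp only [← LSeries_logMul_iterate_one_two]
    simp only [← LSeries_logMul_iterate_two]
    exact LSeries_one_moebius_deriv_deriv (by norm_num)
  norm_cast at h
  rw [logDirichletSum_one_zero, logDirichletSum_moebius_zero, logDirichletSum_moebius_one] at h
  field_simp at h ⊢
  linarith

/-- The main term of `∑_{n ≤ x} 2 ^ ω(n) / n`, in terms of `6 / π² = 1 / ζ(2)` and of the sums
`∑ log(n) ^ j / n ^ 2` for `j = 1, 2`. -/
noncomputable def twoPowOmegaMainTerm (x : ℝ) : ℝ :=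
  3 / Real.pi ^ 2 * Real.log x ^ 2 +
    (2 * γ * (6 / Real.pi ^ 2) + 2 * logDirichletSum 1 1 * (6 / Real.pi ^ 2) ^ 2) * Real.log x +
    ((γ ^ 2 - 2 * stieltjesOne) * (6 / Real.pi ^ 2) +
      4 * γ * logDirichletSum 1 1 * (6 / Real.pi ^ 2) ^ 2 -
      2 * logDirichletSum 1 2 * (6 / Real.pi ^ 2) ^ 2 +
      4 * logDirichletSum 1 1 ^ 2 * (6 / Real.pi ^ 2) ^ 3)

theorem hasSum_moebius_mul_divisorMainTerm {u : ℝ} (hu : 0 < u) :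
    HasSum (fun n : ℕ => (moebius n : ℝ) / (n : ℝ) ^ 2 * divisorMainTerm (u / n))
      (twoPowOmegaMainTerm (u ^ 2)) := by
  have h := (((hasSum_logDirichletSum_moebius 0).mul_right (divisorMainTerm u)).sub
    ((hasSum_logDirichletSum_moebius 1).mul_right (4 * Real.log u + 4 * γ))).add
    ((hasSum_logDirichletSum_moebius 2).mul_left 2)
  rw [logDirichletSum_moebius_zero, logDirichletSum_moebius_one, logDirichletSum_moebius_two] at h
  have main_eq : twoPowOmegaMainTerm (u ^ 2) = 6 / Real.pi ^ 2 * divisorMainTerm u -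
      -logDirichletSum 1 1 * (6 / Real.pi ^ 2) ^ 2 * (4 * Real.log u + 4 * γ) +
      2 * (-logDirichletSum 1 2 * (6 / Real.pi ^ 2) ^ 2 +
        2 * logDirichletSum 1 1 ^ 2 * (6 / Real.pi ^ 2) ^ 3) := by
    rw [twoPowOmegaMainTerm, divisorMainTerm, Real.log_pow]
    push_cast
    ring
  rw [main_eq]
  refine h.congr_fun fun n => ?_
  rcases eq_or_ne n 0 with rfl | hn
  · simp
  · rw [divisorMainTerm, divisorMainTerm, Real.log_div hu.ne' (Nat.cast_ne_zero.2 hn)]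
    ring

end MoebiusLogSum

theorem tendsto_sum_Ioc_of_hasSum {M : Type*} [AddCommMonoid M] [TopologicalSpace M] {f : ℕ → M}
    {S : M} (h : HasSum f S) (h0 : f 0 = 0) :
    Tendsto (fun n => ∑ k ∈ Ioc 0 n, f k) atTop (𝓝 S) := by
  refine (h.tendsto_sum_nat.comp (tendsto_add_atTop_nat 1)).congr fun n => ?_
  rw [Function.comp_apply, range_eq_Ico, sum_eq_sum_Ico_succ_bot n.succ_pos, h0, zero_add]
  rfl

section Numerics

theorem log_six_eq : Real.log 6 = Real.log 2 + Real.log 3 := by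
  norm_num [← Real.log_mul]

theorem log_eight_eq : Real.log 8 = 3 * Real.log 2 := by norm_num [← Real.log_rpow]

theorem log_nine_eq : Real.log 9 = 2 * Real.log 3 := by norm_num [← Real.log_rpow]

theorem log_ten_gt : 2.302585092 < Real.log 10 := by
  rw [Real.log_ten_eq]
  linarith [Real.log_two_gt_d9, Real.log_five_gt_d9]

theorem log_ten_le_log {t : ℝ} (ht : (10 : ℕ) ≤ t) : 2.302585092 ≤ Real.log t :=
  log_ten_gt.le.trans (Real.log_le_log (by norm_num) (by exact_mod_cast ht))

theorem sum_Ioc_zero_ten (f : ℕ → ℝ) :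
    ∑ k ∈ Ioc 0 10, f k =
      f 1 + f 2 + f 3 + f 4 + f 5 + f 6 + f 7 + f 8 + f 9 + f 10 := by
  simp [sum_Ioc_succ_top]

theorem logDirichletSum_one_one_lt : logDirichletSum 1 1 < 0.93754867 := by
  have hlim := (tendsto_sum_Ioc_of_hasSum (hasSum_logDirichletSum_one 1) (by simp)).sub
    ((tendsto_logQuadDiv 0 (-1) (-1) one_ne_zero).comp tendsto_natCast_atTop_atTop)
  rw [sub_zero] at hlim
  have h := (logQuadDiv_eulerMaclaurin_bounds (a := 0) (b := -1) (c := -1) (k := 1) (N := 10)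
    (by norm_num) (fun t ht => ?_) (hlim.congr fun n => by simp [logQuadDivDeriv, logQuadDiv])).2
  · norm_num [eulerMaclaurinSeq, sum_Ioc_zero_ten, logQuadDivDeriv, logQuadDiv, Real.log_four_eq,
      log_six_eq, log_eight_eq, log_nine_eq, Real.log_ten_eq] at h
    linarith [Real.log_two_lt_d9, Real.log_three_lt_d9, Real.log_five_lt_d9, log_seven_bounds.2]
  · have hlog := log_ten_le_log ht
    norm_num [logQuadDivDeriv, logQuadDiv]
    refine div_nonneg ?_ (by positivity)
    linarith

theorem lt_logDirichletSum_one_two : 1.98927 < logDirichletSum 1 2 := by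
  have hlim := (tendsto_sum_Ioc_of_hasSum (hasSum_logDirichletSum_one 2) (by simp)).sub
    ((tendsto_logQuadDiv (-1) (-2) (-2) one_ne_zero).comp tendsto_natCast_atTop_atTop)
  rw [sub_zero] at hlim
  have h := (logQuadDiv_eulerMaclaurin_bounds (a := -1) (b := -2) (c := -2) (k := 1) (N := 10)
    (by norm_num) (fun t ht => ?_)
    (hlim.congr fun n => by norm_num [logQuadDivDeriv, logQuadDiv])).1
  · norm_num [eulerMaclaurinSeq, sum_Ioc_zero_ten, logQuadDivDeriv, logQuadDiv, Real.log_four_eq,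
      log_six_eq, log_eight_eq, log_nine_eq, Real.log_ten_eq] at h
    linarith [Real.log_two_gt_d9, Real.log_three_gt_d9, Real.log_five_gt_d9, log_seven_bounds.1,
      Real.log_two_lt_d9, Real.log_five_lt_d9,
      sq_nonneg (Real.log 2 - 0.6931472), sq_nonneg (Real.log 3 - 1.0986123),
      sq_nonneg (Real.log 5 - 1.6094379), sq_nonneg (Real.log 7 - 1.9459101),
      sq_nonneg (Real.log 2 + Real.log 3 - 1.7917595),
      sq_nonneg (Real.log 2 + Real.log 5 - 2.3025851)]
  · have hlog := log_ten_le_log ht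
    norm_num [logQuadDivDeriv, logQuadDiv]
    refine div_nonneg ?_ (by positivity)
    nlinarith

theorem stieltjesOne_bounds : -0.07282 < stieltjesOne ∧ stieltjesOne < -0.07281 := by
  have h := logQuadDiv_eulerMaclaurin_bounds (a := 1 / 2) (b := 0) (c := 0) (k := 0) (N := 10)
    (by norm_num) (fun t ht => ?_)
    (tendsto_stieltjesOne.congr fun n => by
      norm_num [logQuadDivDeriv, logQuadDiv, div_eq_inv_mul])
  · norm_num [eulerMaclaurinSeq, sum_Ioc_zero_ten, logQuadDivDeriv, logQuadDiv, Real.log_four_eq,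
      log_six_eq, log_eight_eq, log_nine_eq] at h
    have log_ten_lt : Real.log 10 < 2.3025851 := by
      linarith [Real.log_ten_eq, Real.log_two_lt_d9, Real.log_five_lt_d9]
    constructor <;>
      nlinarith [Real.log_two_gt_d9, Real.log_three_gt_d9, Real.log_five_gt_d9, log_seven_bounds.1,
        Real.log_two_lt_d9, Real.log_three_lt_d9, Real.log_five_lt_d9, log_seven_bounds.2,
        log_ten_gt]
  · have hlog := log_ten_le_log ht
    norm_num [logQuadDivDeriv, logQuadDiv]
    refine div_nonneg ?_ (by positivity)
    linarith

theorem six_div_pi_sq_bounds :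
    0.607927 < 6 / Real.pi ^ 2 ∧ 6 / Real.pi ^ 2 < 0.60792711 := by
  rw [lt_div_iff₀ (by positivity), div_lt_iff₀ (by positivity)]
  constructor <;> nlinarith [Real.pi_gt_d20, Real.pi_lt_d20]

theorem linear_coeff_le :
    2 * γ * (6 / Real.pi ^ 2) + 2 * logDirichletSum 1 1 * (6 / Real.pi ^ 2) ^ 2 ≤ 1.3948 := by
  have hγ := eulerMascheroniConstant_bounds.2
  have hS := logDirichletSum_one_one_lt
  have ha := six_div_pi_sq_bounds.2
  set a := 6 / Real.pi ^ 2
  calc 2 * γ * a + 2 * logDirichletSum 1 1 * a ^ 2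
      ≤ 2 * 0.577215676 * 0.60792711 + 2 * 0.93754867 * 0.60792711 ^ 2 := by
        gcongr
    _ ≤ 1.3948 := by norm_num

theorem constant_coeff_le :
    (γ ^ 2 - 2 * stieltjesOne) * (6 / Real.pi ^ 2) +
      4 * γ * logDirichletSum 1 1 * (6 / Real.pi ^ 2) ^ 2 -
      2 * logDirichletSum 1 2 * (6 / Real.pi ^ 2) ^ 2 +
      4 * logDirichletSum 1 1 ^ 2 * (6 / Real.pi ^ 2) ^ 3 ≤ 0.4107 := by
  obtain ⟨hγ, hγ'⟩ := eulerMascheroniConstant_bounds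
  obtain ⟨ha, ha'⟩ := six_div_pi_sq_bounds
  have hS := logDirichletSum_one_one_lt
  have hS0 : 0 ≤ logDirichletSum 1 1 := (hasSum_logDirichletSum_one 1).nonneg fun n => by positivity
  have hS2 := lt_logDirichletSum_one_two
  have hγ₁ := stieltjesOne_bounds.1
  set a := 6 / Real.pi ^ 2
  calc (γ ^ 2 - 2 * stieltjesOne) * a + 4 * γ * logDirichletSum 1 1 * a ^ 2 -
        2 * logDirichletSum 1 2 * a ^ 2 + 4 * logDirichletSum 1 1 ^ 2 * a ^ 3
      ≤ (0.577215676 ^ 2 - 2 * -0.07282) * 0.60792711 +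
          4 * 0.577215676 * 0.93754867 * 0.60792711 ^ 2 - 2 * 1.98927 * 0.607927 ^ 2 +
          4 * 0.93754867 ^ 2 * 0.60792711 ^ 3 := by
        gcongr
    _ ≤ 0.4107 := by norm_num

end Numerics

section Tail

theorem logQuadDiv_nonneg {a b c : ℝ} (k : ℕ) (ha : 0 < a) (h : discrim a b c ≤ 0) {t : ℝ}
    (ht : 0 ≤ t) : 0 ≤ logQuadDiv a b c k t := by
  refine div_nonneg ?_ (pow_nonneg ht k)
  rw [discrim] at h
  nlinarith [sq_nonneg (2 * a * Real.log t + b)]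

theorem antitoneOn_logQuadDiv {a b c : ℝ} {k : ℕ}
    (h : ∀ t, 0 < t → logQuadDiv (-k * a) (2 * a - k * b) (b - k * c) (k + 1) t ≤ 0) :
    AntitoneOn (logQuadDiv a b c k) (Set.Ioi 0) := by
  refine antitoneOn_of_hasDerivWithinAt_nonpos (convex_Ioi 0)
    (fun t ht => (hasDerivAt_logQuadDiv a b c k ht).continuousAt.continuousWithinAt)
    (fun t ht => (hasDerivAt_logQuadDiv a b c k ?_).hasDerivWithinAt) fun t ht => h t ?_ <;>
  exact interior_subset ht

theorem antitoneOn_logQuadDiv_two_neg_two_one : AntitoneOn (logQuadDiv 2 (-2) 1 2) (Set.Ioi 0) := by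
  refine antitoneOn_logQuadDiv fun t ht => div_nonpos_of_nonpos_of_nonneg ?_ (by positivity)
  push_cast
  nlinarith [sq_nonneg (Real.log t - 1)]

theorem logQuadDiv_two_two_three_le {t : ℝ} (ht : 1 ≤ t) : logQuadDiv 2 2 3 1 t ≤ 3 := by
  have hanti : AntitoneOn (logQuadDiv 2 2 3 1) (Set.Ioi 0) :=
    antitoneOn_logQuadDiv fun t ht => div_nonpos_of_nonpos_of_nonneg
      (by push_cast; nlinarith [sq_nonneg (2 * Real.log t - 1)]) (by positivity)
  simpa [logQuadDiv] using hanti (Set.mem_Ioi.2 one_pos) (Set.mem_Ioi.2 (one_pos.trans_le ht)) ht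

theorem sum_Ioc_le_sub_of_antitoneOn {f F : ℝ → ℝ} {m n : ℕ} (hmn : m ≤ n)
    (hF : ∀ t ∈ Set.Icc (m : ℝ) n, HasDerivAt F (f t) t) (hf : AntitoneOn f (Set.Icc m n)) :
    ∑ k ∈ Ioc m n, f k ≤ F n - F m := by
  have hmn' : (m : ℝ) ≤ n := Nat.cast_le.2 hmn
  rw [← Set.uIcc_of_le hmn'] at hF
  have hint : IntervalIntegrable f MeasureTheory.volume m n :=
    AntitoneOn.intervalIntegrable (by rwa [Set.uIcc_of_le hmn'])
  rw [← intervalIntegral.integral_eq_sub_of_hasDerivAt hF hint]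
  refine le_trans (le_of_eq ?_) (AntitoneOn.sum_le_integral_Ico hmn hf)
  rw [sum_Ico_add' (fun k : ℕ => f k)]
  exact sum_congr (by ext; simp only [mem_Ioc, mem_Ico]; omega) fun _ _ => rfl

theorem sum_logQuadDiv_div_le {u : ℝ} (hu : 0 < u) {m n : ℕ} (hum : u ≤ m + 1) (hmn : m < n) :
    ∑ k ∈ Ioc m n, logQuadDiv 2 (-2) 1 2 (k / u) ≤ 1 + 3 * u := by
  have hm : 1 ≤ ((m + 1 : ℕ) : ℝ) / u := (one_le_div hu).2 (by exact_mod_cast hum)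
  have pos {t : ℝ} (ht : ((m + 1 : ℕ) : ℝ) ≤ t) : 0 < t / u :=
    div_pos (lt_of_lt_of_le (by positivity) ht) hu
  have first_le : logQuadDiv 2 (-2) 1 2 ((m + 1 : ℕ) / u) ≤ 1 := by
    simpa [logQuadDiv] using antitoneOn_logQuadDiv_two_neg_two_one (Set.mem_Ioi.2 one_pos)
      (Set.mem_Ioi.2 (one_pos.trans_le hm)) hm
  have rest_le := sum_Ioc_le_sub_of_antitoneOn (m := m + 1) (n := n)
    (f := fun t => logQuadDiv 2 (-2) 1 2 (t / u)) (F := fun t => -u * logQuadDiv 2 2 3 1 (t / u))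
    hmn (fun t ht => ?_) fun s hs t ht hst => ?_
  · have h3 := logQuadDiv_two_two_three_le hm
    have h0 : 0 ≤ logQuadDiv 2 2 3 1 (n / u) :=
      logQuadDiv_nonneg 1 two_pos (by norm_num [discrim]) (by positivity)
    rw [← sum_Ioc_consecutive _ m.le_succ hmn, Nat.Ioc_succ_singleton, sum_singleton]
    nlinarith
  · have h := ((hasDerivAt_logQuadDiv 2 2 3 1 (pos ht.1)).comp t
      ((hasDerivAt_id t).div_const u)).const_mul (-u)
    refine h.congr_deriv ?_
    unfold logQuadDiv
    push_cast
    field_simp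
    ring
  · exact antitoneOn_logQuadDiv_two_neg_two_one (pos hs.1) (pos ht.1) (by gcongr)

theorem abs_divisorMainTerm_le {t : ℝ} (ht : 0 < t) (ht1 : t ≤ 1) :
    |divisorMainTerm t| ≤ 2 * Real.log t ^ 2 + 2 * Real.log t + 1 := by
  have hlog : Real.log t ≤ 0 := Real.log_nonpos ht.le ht1
  obtain ⟨hγ, hγ'⟩ := eulerMascheroniConstant_bounds
  obtain ⟨hγ₁, hγ₁'⟩ := stieltjesOne_bounds
  rw [divisorMainTerm, abs_le]
  constructor
  · nlinarith [sq_nonneg (Real.log t + 0.54)]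
  · nlinarith

theorem abs_moebius_mul_divisorMainTerm_le {u : ℝ} (hu : 0 < u) {k : ℕ} (hk : u ≤ k) :
    |(moebius k : ℝ) / (k : ℝ) ^ 2 * divisorMainTerm (u / k)| ≤
      1 / u ^ 2 * logQuadDiv 2 (-2) 1 2 (k / u) := by
  have hk0 : 0 < (k : ℝ) := hu.trans_le hk
  have hμ : |(moebius k : ℝ)| ≤ 1 := by
    exact_mod_cast ArithmeticFunction.abs_moebius_le_one (n := k)
  calc |(moebius k : ℝ) / (k : ℝ) ^ 2 * divisorMainTerm (u / k)|
      = |(moebius k : ℝ)| / (k : ℝ) ^ 2 * |divisorMainTerm (u / k)| := by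
        rw [abs_mul, abs_div, abs_of_pos (by positivity : 0 < (k : ℝ) ^ 2)]
    _ ≤ 1 / (k : ℝ) ^ 2 * (2 * Real.log (u / k) ^ 2 + 2 * Real.log (u / k) + 1) := by
        gcongr
        exact abs_divisorMainTerm_le (div_pos hu hk0) ((div_le_one hk0).2 hk)
    _ = 1 / u ^ 2 * logQuadDiv 2 (-2) 1 2 (k / u) := by
        rw [logQuadDiv, ← inv_div (k : ℝ) u, Real.log_inv]
        field_simp

theorem abs_sum_moebius_mul_divisorMainTerm_sub_le {u : ℝ} (hu : 0 < u) :
    |∑ k ∈ Ioc 0 ⌊u⌋₊, (moebius k : ℝ) / (k : ℝ) ^ 2 * divisorMainTerm (u / k) -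
      twoPowOmegaMainTerm (u ^ 2)| ≤ 1 / u ^ 2 + 3 / u := by
  have hlim := tendsto_sum_Ioc_of_hasSum (hasSum_moebius_mul_divisorMainTerm hu) (by simp)
  refine le_of_tendsto (hlim.const_sub _).abs ?_
  filter_upwards [eventually_gt_atTop ⌊u⌋₊] with n hn
  rw [← sum_Ioc_consecutive _ (Nat.zero_le _) hn.le, sub_add_cancel_left, abs_neg]
  have hum := (Nat.lt_floor_add_one u).le
  calc |∑ k ∈ Ioc ⌊u⌋₊ n, (moebius k : ℝ) / (k : ℝ) ^ 2 * divisorMainTerm (u / k)|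
      ≤ ∑ k ∈ Ioc ⌊u⌋₊ n, 1 / u ^ 2 * logQuadDiv 2 (-2) 1 2 (k / u) := by
        refine (abs_sum_le_sum_abs _ _).trans (sum_le_sum fun k hk => ?_)
        exact abs_moebius_mul_divisorMainTerm_le hu
          (hum.trans (by exact_mod_cast (mem_Ioc.1 hk).1))
    _ ≤ 1 / u ^ 2 * (1 + 3 * u) := by
        rw [← mul_sum]
        gcongr
        exact sum_logQuadDiv_div_le hu hum hn
    _ = 1 / u ^ 2 + 3 / u := by field_simp

end Tail

section Assembly

theorem abs_moebius_mul_sub_le (k : ℕ) (a b : ℝ) :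
    |(moebius k : ℝ) / (k : ℝ) ^ 2 * a - (moebius k : ℝ) / (k : ℝ) ^ 2 * b| ≤
      |a - b| / (k : ℝ) ^ 2 := by
  have hμ : |(moebius k : ℝ)| ≤ 1 := by
    exact_mod_cast ArithmeticFunction.abs_moebius_le_one (n := k)
  rw [← mul_sub, abs_mul, abs_div, abs_of_nonneg (sq_nonneg (k : ℝ)), div_mul_eq_mul_div]
  gcongr
  exact mul_le_of_le_one_left (abs_nonneg _) hμ

theorem abs_sum_moebius_mul_sum_recip_sub_le {u : ℝ} (hu : 0 < u) :
    |∑ k ∈ Ioc 0 ⌊u⌋₊, (moebius k : ℝ) / (k : ℝ) ^ 2 *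
        ∑ n ∈ Ioc 0 (⌊u ^ 2⌋₊ / k ^ 2), (recip * recip) n -
      ∑ k ∈ Ioc 0 ⌊u⌋₊, (moebius k : ℝ) / (k : ℝ) ^ 2 * divisorMainTerm (u / k)| ≤
      (harmonic ⌊u⌋₊ + 17 / 20) / u := by
  rw [← sum_sub_distrib]
  calc |∑ k ∈ Ioc 0 ⌊u⌋₊, ((moebius k : ℝ) / (k : ℝ) ^ 2 *
          ∑ n ∈ Ioc 0 (⌊u ^ 2⌋₊ / k ^ 2), (recip * recip) n -
        (moebius k : ℝ) / (k : ℝ) ^ 2 * divisorMainTerm (u / k))|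
      ≤ ∑ k ∈ Ioc 0 ⌊u⌋₊, (1 / u * (1 / k) + 17 / 20 / u ^ 2) := by
        refine (abs_sum_le_sum_abs _ _).trans (sum_le_sum fun k hk => ?_)
        rw [mem_Ioc] at hk
        have hk0 : 0 < (k : ℝ) := Nat.cast_pos.2 hk.1
        have hku : (k : ℝ) ≤ u := (Nat.le_floor_iff hu.le).1 hk.2
        have hfloor : ⌊u ^ 2⌋₊ / k ^ 2 = ⌊(u / k) ^ 2⌋₊ := by
          rw [div_pow, ← Nat.cast_pow, Nat.floor_div_natCast]
        calc _ ≤ _ := abs_moebius_mul_sub_le k _ _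
          _ ≤ (1 / (u / k) + 17 / 20 / (u / k) ^ 2) / (k : ℝ) ^ 2 := by
            rw [hfloor]
            gcongr
            exact abs_sum_recip_mul_recip_sub_le ((one_le_div hk0).2 hku)
          _ = 1 / u * (1 / k) + 17 / 20 / u ^ 2 := by field_simp
    _ = harmonic ⌊u⌋₊ / u + ⌊u⌋₊ * (17 / 20 / u ^ 2) := by
        rw [sum_add_distrib, ← mul_sum, ← harmonic_eq_sum_Ioc, sum_const, Nat.card_Ioc,
          nsmul_eq_mul, Nat.sub_zero, one_div_mul_eq_div]
    _ ≤ harmonic ⌊u⌋₊ / u + u * (17 / 20 / u ^ 2) := by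
        gcongr
        exact Nat.floor_le hu.le
    _ = (harmonic ⌊u⌋₊ + 17 / 20) / u := by field_simp

theorem abs_sum_twoPowOmegaDiv_sub_le {u : ℝ} (hu : 0 < u) :
    |∑ n ∈ Ioc 0 ⌊u ^ 2⌋₊, twoPowOmegaDiv n - twoPowOmegaMainTerm (u ^ 2)| ≤
      (harmonic ⌊u⌋₊ + 77 / 20 + 1 / u) / u := by
  rw [sum_twoPowOmegaDiv, sqrt_floor_sq hu.le]
  calc _ ≤ _ := abs_sub_le _ _ _
    _ ≤ (harmonic ⌊u⌋₊ + 17 / 20) / u + (1 / u ^ 2 + 3 / u) :=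
        add_le_add (abs_sum_moebius_mul_sum_recip_sub_le hu)
          (abs_sum_moebius_mul_divisorMainTerm_sub_le hu)
    _ = (harmonic ⌊u⌋₊ + 77 / 20 + 1 / u) / u := by
        field_simp
        ring

theorem harmonic_floor_le {u : ℝ} (hu : 10 ≤ u) : harmonic ⌊u⌋₊ ≤ Real.log u + 0.63 := by
  have hγ := eulerMascheroniConstant_bounds.2
  have h := (abs_le.1 (abs_harmonicRemainder_floor_le (t := u) (by linarith))).2
  have hu2 : 1 / (2 * u) ≤ 1 / (2 * 10) := by gcongr
  have hu12 : 1 / (12 * u ^ 2) ≤ 1 / (12 * 10 ^ 2) := by gcongr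
  rw [harmonicRemainder] at h
  norm_num at hu2 hu12 h ⊢
  linarith

theorem log_cube_add_le {v : ℝ} (hv : 10 ≤ v ^ 3) (hv0 : 0 < v) :
    Real.log (v ^ 3) + 4.58 ≤ 3.253 * v := by
  have hv_lower : 2.154 ≤ v := le_of_pow_le_pow_left₀ three_ne_zero hv0.le (by linarith)
  have log_le : Real.log v ≤ v / 2.718 := by
    calc Real.log v = Real.log (v / Real.exp 1) + 1 := by
          rw [Real.log_div hv0.ne' (Real.exp_pos 1).ne', Real.log_exp]
          ring
      _ ≤ v / Real.exp 1 := by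
          linarith [Real.log_le_sub_one_of_pos (x := v / Real.exp 1) (by positivity)]
      _ ≤ v / 2.718 := by
          gcongr
          linarith [Real.exp_one_gt_d9]
  rw [Real.log_pow]
  norm_num at hv_lower log_le ⊢
  linarith

theorem twoPowOmegaMainTerm_le {x : ℝ} (hx : 1 ≤ x) :
    twoPowOmegaMainTerm x ≤
      3 / Real.pi ^ 2 * Real.log x ^ 2 + 1.3948 * Real.log x + 0.4107 := by
  rw [twoPowOmegaMainTerm]
  gcongr
  · exact Real.log_nonneg hx
  · exact linear_coeff_le
  · exact constant_coeff_le

theorem sum_Icc_two_pow_omega_div (N : ℕ) :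
    ∑ n ∈ Icc 1 N, (2 : ℝ) ^ n.primeFactors.card / n = ∑ n ∈ Ioc 0 N, twoPowOmegaDiv n := by
  simp only [twoPowOmegaDiv_apply]
  rfl

theorem sum_two_pow_omega_div_le_of_ge {x : ℝ} (hx : 100 ≤ x) :
    ∑ n ∈ Icc 1 ⌊x⌋₊, (2 : ℝ) ^ n.primeFactors.card / n ≤
      3 / Real.pi ^ 2 * Real.log x ^ 2 + 1.3948 * Real.log x + 0.4107 +
        3.253 * x ^ (-(1 : ℝ) / 3) := by
  have hx0 : 0 < x := by linarith
  obtain ⟨v, hv0, rfl⟩ : ∃ v : ℝ, 0 < v ∧ x = v ^ 6 :=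
    ⟨x ^ (1 / 6 : ℝ), by positivity, by
      rw [← Real.rpow_natCast, ← Real.rpow_mul hx0.le]; norm_num⟩
  have hv3 : 10 ≤ v ^ 3 := by nlinarith [pow_pos hv0 3]
  have hpow : (v ^ 6) ^ (-(1 : ℝ) / 3) = v / v ^ 3 := by
    rw [← Real.rpow_natCast, ← Real.rpow_mul hv0.le]
    norm_num [Real.rpow_neg hv0.le]
    field_simp
  have error_le : (harmonic ⌊v ^ 3⌋₊ + 77 / 20 + 1 / v ^ 3) / v ^ 3 ≤ 3.253 * (v / v ^ 3) := by
    have hinv : 1 / v ^ 3 ≤ 1 / 10 := by gcongr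
    rw [← mul_div_assoc]
    gcongr
    linarith [harmonic_floor_le hv3, log_cube_add_le hv3 hv0]
  have hsum := (abs_le.1 (abs_sum_twoPowOmegaDiv_sub_le (pow_pos hv0 3))).2
  have hmain := twoPowOmegaMainTerm_le (x := v ^ 6) (by linarith)
  rw [← pow_mul] at hsum
  rw [sum_Icc_two_pow_omega_div, hpow]
  linarith

end Assembly

section SmallValues

/-- An integer upper bound for `10 ^ 6 * ∑ k ≤ n, 2 ^ ω(k) / k`, obtained by rounding each term
up so that it can be evaluated by the kernel. -/
def scaledOmegaSum (n : ℕ) : ℕ :=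
  ∑ k ∈ Icc 1 n, (10 ^ 6 * 2 ^ k.primeFactors.card / k + 1)

/-- An integer lower bound for `10 ^ 6 * log (n + 1)`: each term rounds down the lower bound
`10 ^ 6 * 2 / (2 * k + 1)` for `10 ^ 6 * log (1 + 1 / k)`. -/
def scaledLog (n : ℕ) : ℕ := ∑ k ∈ Icc 1 n, 2 * 10 ^ 6 / (2 * k + 1)

theorem sum_le_scaledOmegaSum (n : ℕ) :
    ∑ k ∈ Icc 1 n, (2 : ℝ) ^ k.primeFactors.card / k ≤ scaledOmegaSum n / 10 ^ 6 := by
  rw [scaledOmegaSum, Nat.cast_sum, sum_div]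
  refine sum_le_sum fun k _ => ?_
  have h := Nat.lt_floor_add_one ((10 ^ 6 * 2 ^ k.primeFactors.card : ℕ) / (k : ℝ))
  rw [Nat.floor_div_natCast, Nat.floor_natCast] at h
  rw [le_div_iff₀ (by positivity), div_mul_eq_mul_div, mul_comm]
  exact_mod_cast h.le

theorem two_div_le_log_sub_log {t : ℝ} (ht : 0 < t) :
    2 / (2 * t + 1) ≤ Real.log (t + 1) - Real.log t := by
  rw [← Real.log_div (by positivity) ht.ne']
  convert Real.le_log_one_add_of_nonneg (one_div_nonneg.2 ht.le) using 1
  · field_simp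
    ring
  · congr 1
    field_simp

theorem scaledLog_le (n : ℕ) : (scaledLog n : ℝ) / 10 ^ 6 ≤ Real.log (n + 1) := by
  have term_le (k : ℕ) : ((2 * 10 ^ 6 / (2 * (k + 1) + 1) : ℕ) : ℝ) / 10 ^ 6 ≤
      Real.log ((k + 1 : ℕ) + 1) - Real.log (k + 1) :=
    calc ((2 * 10 ^ 6 / (2 * (k + 1) + 1) : ℕ) : ℝ) / 10 ^ 6
        ≤ ((2 * 10 ^ 6 : ℕ) / (2 * (k + 1) + 1 : ℕ) : ℝ) / 10 ^ 6 := by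
          gcongr
          exact Nat.cast_div_le
      _ = 2 / (2 * ((k + 1 : ℕ) : ℝ) + 1) := by
          push_cast
          field_simp
          norm_num
      _ ≤ _ := by exact_mod_cast two_div_le_log_sub_log (Nat.cast_pos.2 k.succ_pos)
  induction n with
  | zero => simp [scaledLog]
  | succ n ih =>
    have hstep : scaledLog (n + 1) = scaledLog n + 2 * 10 ^ 6 / (2 * (n + 1) + 1) :=
      sum_Icc_succ_top (by omega) _
    rw [hstep, Nat.cast_add, add_div]
    linarith [term_le n]

theorem scaledOmegaSum_le_table : ∀ n ∈ range 99, 10 ^ 10 * scaledOmegaSum (n + 1) ≤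
    3039 * scaledLog n ^ 2 + 13948 * 10 ^ 6 * scaledLog n + 11107 * 10 ^ 12 := by
  decide +kernel

theorem scaledOmegaSum_div_le {n : ℕ} (hn : n < 99) :
    (scaledOmegaSum (n + 1) : ℝ) / 10 ^ 6 ≤
      0.3039 * ((scaledLog n : ℝ) / 10 ^ 6) ^ 2 + 1.3948 * ((scaledLog n : ℝ) / 10 ^ 6) +
        1.1107 := by
  have table : (10 ^ 10 * scaledOmegaSum (n + 1) : ℝ) ≤
      3039 * scaledLog n ^ 2 + 13948 * 10 ^ 6 * scaledLog n + 11107 * 10 ^ 12 := by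
    exact_mod_cast scaledOmegaSum_le_table n (mem_range.2 hn)
  linarith

theorem le_rpow_neg_third {x : ℝ} (hx : 0 < x) (hx' : x ≤ 100) :
    0.7 ≤ 3.253 * x ^ (-(1 : ℝ) / 3) := by
  have hcbrt : x ^ (1 / 3 : ℝ) ≤ 4.645 := by
    calc x ^ (1 / 3 : ℝ) ≤ (4.645 ^ 3 : ℝ) ^ (1 / 3 : ℝ) := by gcongr; linarith
      _ = 4.645 := by
        rw [← Real.rpow_natCast, ← Real.rpow_mul (by norm_num)]
        norm_num
  rw [neg_div, Real.rpow_neg hx.le, ← div_eq_mul_inv, le_div_iff₀ (by positivity)]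
  linarith

theorem sum_two_pow_omega_div_le_of_lt {x : ℝ} (hx : 1 ≤ x) (hx' : x < 100) :
    ∑ n ∈ Icc 1 ⌊x⌋₊, (2 : ℝ) ^ n.primeFactors.card / n ≤
      3 / Real.pi ^ 2 * Real.log x ^ 2 + 1.3948 * Real.log x + 0.4107 +
        3.253 * x ^ (-(1 : ℝ) / 3) := by
  have hx0 : 0 < x := by linarith
  obtain ⟨n, hn⟩ := Nat.exists_eq_add_of_le' (Nat.floor_pos.2 hx)
  have hn99 : n < 99 := by
    have : ⌊x⌋₊ < 100 := (Nat.floor_lt hx0.le).2 (by exact_mod_cast hx')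
    omega
  have hnx : (n : ℝ) + 1 ≤ x := by exact_mod_cast hn ▸ Nat.floor_le hx0.le
  have hlog := (scaledLog_le n).trans (Real.log_le_log (by positivity) hnx)
  have hpi : 0.3039 ≤ 3 / Real.pi ^ 2 := by
    linarith [six_div_pi_sq_bounds.1, (by ring : 3 / Real.pi ^ 2 = 6 / Real.pi ^ 2 / 2)]
  calc ∑ n ∈ Icc 1 ⌊x⌋₊, (2 : ℝ) ^ n.primeFactors.card / n
      ≤ scaledOmegaSum (n + 1) / 10 ^ 6 := by
        rw [hn]
        exact sum_le_scaledOmegaSum (n + 1)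
    _ ≤ 0.3039 * ((scaledLog n : ℝ) / 10 ^ 6) ^ 2 + 1.3948 * ((scaledLog n : ℝ) / 10 ^ 6) +
        1.1107 := scaledOmegaSum_div_le hn99
    _ ≤ 3 / Real.pi ^ 2 * Real.log x ^ 2 + 1.3948 * Real.log x + 1.1107 := by gcongr
    _ ≤ _ := by linarith [le_rpow_neg_third hx0 hx'.le]

end SmallValues

theorem stmt_15 (x : ℝ) (hx : 1 ≤ x) :
    ∑ n ∈ Finset.Icc 1 ⌊x⌋₊, (2 : ℝ) ^ n.primeFactors.card / n ≤
      3 / Real.pi ^ 2 * Real.log x ^ 2 + 1.3948 * Real.log x + 0.4107 +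
        3.253 * x ^ (-(1 : ℝ) / 3) := by
  rcases lt_or_ge x 100 with h | h
  · exact sum_two_pow_omega_div_le_of_lt hx h
  · exact sum_two_pow_omega_div_le_of_ge h
end

section
/- For all real x ≥ 1, ∑_{n ≤ x} 2^{ω(n)} ≤ (6/π²)·x·log x + 0.787·x + 8.14·x^{2/3} − 0.3762. -/
/-!
Since `2 ^ ω(n)` counts the squarefree divisors of `n`, inserting `μ(m)² = ∑_{d² ∣ m} μ(d)` gives
`∑_{n ≤ x} 2 ^ ω(n) = ∑_d μ(d) D(x / d²)`, where `D` is the summatory function of the divisor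
function. Dirichlet's hyperbola method, with the harmonic numbers compared both to
`γ + log (u + 1)` and to `γ + log (u + 1/2)`, yields `D(y) = y log y + (2γ - 1) y + Δ(y)` with
`|Δ(y)| ≤ 2 √y` for `y ≥ 1`, and hence `|Δ(y)| ≤ 2 y ^ (2/3)` for all `y > 0`. The exponent `2/3`
exceeds `1/2`, so the errors `Δ(x / d²)` are absolutely summable over all `d`, with sum at most
`2 ζ(4/3) x ^ (2/3)`. The main terms involve only `1 / ζ` and `(1 / ζ)'` at `2`.
-/

open Finset Filter Topology Real
open scoped ArithmeticFunction.Moebius ArithmeticFunction.zeta ArithmeticFunction.sigma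

local notation "γ" => Real.eulerMascheroniConstant

/-- The summatory function `D(N) = ∑_{n ≤ N} τ(n)` of the number-of-divisors function. -/
def divisorSummatory (N : ℕ) : ℕ := ∑ n ∈ Ioc 0 N, σ 0 n

lemma divisorSummatory_eq_sum_div (N : ℕ) : divisorSummatory N = ∑ n ∈ Ioc 0 N, N / n :=
  ArithmeticFunction.sum_Ioc_sigma0_eq_sum_div N

lemma divisorSummatory_zero : divisorSummatory 0 = 0 := rfl

section MoebiusInversion

open ArithmeticFunction

lemma two_pow_card_primeFactors_eq_sum_moebius_sq {n : ℕ} (hn : n ≠ 0) :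
    (2 : ℤ) ^ n.primeFactors.card = ∑ d ∈ n.divisors, μ d ^ 2 := by
  simp_rw [moebius_sq]
  rw [← sum_filter, Nat.sum_divisors_filter_squarefree hn, sum_const, card_powerset,
    Nat.factors_eq]
  simp

lemma sq_dvd_sq_mul_iff_of_squarefree {a b d : ℕ} (ha : Squarefree a) :
    d ^ 2 ∣ b ^ 2 * a ↔ d ∣ b := by
  refine ⟨fun h => ?_, fun h => (pow_dvd_pow_of_dvd h 2).mul_right a⟩
  rcases (d.gcd b).eq_zero_or_pos with hgcd | hgcd
  · simp [(Nat.gcd_eq_zero_iff.1 hgcd).2]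
  obtain ⟨g, d', b', hg, hcop, rfl, rfl⟩ := Nat.exists_coprime' hgcd
  have hd'a : d' ^ 2 ∣ a := by
    refine (hcop.pow 2 2).dvd_of_dvd_mul_left
      (Nat.dvd_of_mul_dvd_mul_left (pow_pos hg 2) ?_)
    convert h using 1 <;> ring
  have hd' : d' = 1 := Nat.isUnit_iff.1 (ha d' (sq d' ▸ hd'a))
  simp [hd']

lemma sum_moebius_of_sq_dvd {m N : ℕ} (hm : m ≠ 0) (hmN : m ≤ N) :
    ∑ d ∈ Ioc 0 N with d ^ 2 ∣ m, μ d = μ m ^ 2 := by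
  obtain ⟨a, b, rfl, ha⟩ := Nat.sq_mul_squarefree m
  have hb : b ≠ 0 := by rintro rfl; simp at hm
  have hbN : b ≤ N := calc
    b ≤ b ^ 2 := Nat.le_self_pow two_ne_zero b
    _ ≤ b ^ 2 * a := Nat.le_mul_of_pos_right _ ha.ne_zero.bot_lt
    _ ≤ N := hmN
  have hdivisors : {d ∈ Ioc 0 N | d ^ 2 ∣ b ^ 2 * a} = b.divisors := by
    ext d
    simp only [sq_dvd_sq_mul_iff_of_squarefree ha, mem_filter, mem_Ioc, Nat.mem_divisors]
    exact ⟨fun h => ⟨h.2, hb⟩, fun h => ⟨⟨Nat.pos_of_dvd_of_pos h.1 hb.bot_lt,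
      (Nat.le_of_dvd hb.bot_lt h.1).trans hbN⟩, h.1⟩⟩
  have hsquarefree : Squarefree (b ^ 2 * a) ↔ b = 1 := by
    refine ⟨fun h => Nat.isUnit_iff.1 (h b (sq b ▸ dvd_mul_right _ _)), ?_⟩
    rintro rfl
    simpa using ha
  rw [hdivisors, ← coe_mul_zeta_apply, moebius_mul_coe_zeta,
    one_apply, moebius_sq]
  simp only [hsquarefree]

lemma sum_Ioc_filter_dvd {M : Type*} [AddCommMonoid M] {k : ℕ} (hk : 0 < k) (N : ℕ) (f : ℕ → M) :
    ∑ m ∈ Ioc 0 N with k ∣ m, f m = ∑ a ∈ Ioc 0 (N / k), f (k * a) := by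
  have himage : {m ∈ Ioc 0 N | k ∣ m} = (Ioc 0 (N / k)).image (k * ·) := by
    ext m
    simp only [mem_filter, mem_Ioc, mem_image, Nat.le_div_iff_mul_le hk]
    constructor
    · rintro ⟨⟨hm0, hmN⟩, a, rfl⟩
      exact ⟨a, ⟨Nat.pos_of_mul_pos_left hm0, by rwa [mul_comm]⟩, rfl⟩
    · rintro ⟨a, ⟨ha0, haN⟩, rfl⟩
      exact ⟨⟨Nat.mul_pos hk ha0, by rwa [mul_comm]⟩, dvd_mul_right _ _⟩
  rw [himage, sum_image fun a _ b _ h => Nat.eq_of_mul_eq_mul_left hk h]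

theorem sum_two_pow_card_primeFactors_eq_sum_moebius_mul (N : ℕ) :
    ∑ n ∈ Icc 1 N, (2 : ℤ) ^ n.primeFactors.card =
      ∑ d ∈ Ioc 0 N, μ d * divisorSummatory (N / d ^ 2) := by
  calc ∑ n ∈ Icc 1 N, (2 : ℤ) ^ n.primeFactors.card
      = ∑ n ∈ Ioc 0 N, (pmul μ μ * ζ) n := by
        refine sum_congr rfl fun n hn => ?_
        rw [two_pow_card_primeFactors_eq_sum_moebius_sq (by grind),
          coe_mul_zeta_apply]
        simp only [pmul_apply, sq]
    _ = ∑ m ∈ Ioc 0 N, μ m ^ 2 * ((N / m : ℕ) : ℤ) := by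
        simp only [sum_Ioc_mul_zeta_eq_sum, pmul_apply, sq]
    _ = ∑ m ∈ Ioc 0 N, ∑ d ∈ Ioc 0 N with d ^ 2 ∣ m, μ d * ((N / m : ℕ) : ℤ) := by
        refine sum_congr rfl fun m hm => ?_
        rw [mem_Ioc] at hm
        rw [← sum_mul, sum_moebius_of_sq_dvd hm.1.ne' hm.2]
    _ = ∑ d ∈ Ioc 0 N, μ d * ∑ m ∈ Ioc 0 N with d ^ 2 ∣ m, ((N / m : ℕ) : ℤ) := by
        simp_rw [mul_sum, sum_filter]
        exact sum_comm
    _ = ∑ d ∈ Ioc 0 N, μ d * divisorSummatory (N / d ^ 2) := by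
        refine sum_congr rfl fun d hd => ?_
        rw [sum_Ioc_filter_dvd (pow_pos (mem_Ioc.1 hd).1 2), divisorSummatory_eq_sum_div]
        simp only [Nat.div_div_eq_div_mul, Nat.cast_sum]

end MoebiusInversion

/-! ### The divisor problem -/

lemma sum_Ioc_div_add_mul {N u v : ℕ} (huv : u * v ≤ N) (hN : N < (u + 1) * (v + 1)) :
    ∑ a ∈ Ioc u N, N / a + u * v = ∑ b ∈ Ioc 0 v, N / b := by
  have habove (a : ℕ) (ha : a ∈ Ioc u N) :
      N / a = #(bipartiteAbove (fun a b => a * b ≤ N) (Ioc 0 v) a) := by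
    rw [mem_Ioc] at ha
    have : bipartiteAbove (fun a b => a * b ≤ N) (Ioc 0 v) a = Ioc 0 (N / a) := by
      ext b
      simp only [mem_bipartiteAbove, mem_Ioc, Nat.le_div_iff_mul_le (Nat.zero_lt_of_lt ha.1),
        mul_comm b a]
      exact ⟨fun h => ⟨h.1.1, h.2⟩, fun h => ⟨⟨h.1, by by_contra! hvb; nlinarith⟩, h.2⟩⟩
    rw [this, Nat.card_Ioc, Nat.sub_zero]
  have hbelow (b : ℕ) (hb : b ∈ Ioc 0 v) :
      #(bipartiteBelow (fun a b => a * b ≤ N) (Ioc u N) b) + u = N / b := by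
    rw [mem_Ioc] at hb
    have : bipartiteBelow (fun a b => a * b ≤ N) (Ioc u N) b = Ioc u (N / b) := by
      ext a
      simp only [mem_bipartiteBelow, mem_Ioc, Nat.le_div_iff_mul_le hb.1]
      exact ⟨fun h => ⟨h.1.1, h.2⟩, fun h => ⟨⟨h.1, by nlinarith⟩, h.2⟩⟩
    have huNb : u ≤ N / b := (Nat.le_div_iff_mul_le hb.1).2 (by nlinarith)
    rw [this, Nat.card_Ioc, Nat.sub_add_cancel huNb]
  rw [sum_congr rfl habove, sum_card_bipartiteAbove_eq_sum_card_bipartiteBelow,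
    ← sum_congr rfl hbelow, sum_add_distrib, sum_const, Nat.card_Ioc, smul_eq_mul, Nat.sub_zero,
    mul_comm u v]

lemma divisorSummatory_add_sqrt_sq (N : ℕ) :
    divisorSummatory N + N.sqrt ^ 2 = 2 * ∑ n ∈ Ioc 0 N.sqrt, N / n := by
  rw [divisorSummatory_eq_sum_div,
    ← sum_Ioc_consecutive _ (Nat.zero_le _) (Nat.sqrt_le_self N), add_assoc, sq,
    sum_Ioc_div_add_mul (Nat.sqrt_le N) (Nat.lt_succ_sqrt N), two_mul]

/-! ### The integral test for convex functions -/

lemma two_mul_mul_le_sub_of_convexOn {f F : ℝ → ℝ} {a h : ℝ} (hh : 0 ≤ h)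
    (hf : ConvexOn ℝ (Set.Icc (a - h) (a + h)) f)
    (hF : ∀ t ∈ Set.Icc (a - h) (a + h), HasDerivAt F (f t) t) :
    2 * h * f a ≤ F (a + h) - F (a - h) := by
  have hmem {t : ℝ} (ht : t ∈ Set.Icc 0 h) :
      a + t ∈ Set.Icc (a - h) (a + h) ∧ a - t ∈ Set.Icc (a - h) (a + h) := by
    constructor <;> constructor <;> linarith [ht.1, ht.2]
  have hderiv {t : ℝ} (ht : t ∈ Set.Icc 0 h) :
      HasDerivAt (fun t => F (a + t) - F (a - t) - 2 * t * f a)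
        (f (a + t) + f (a - t) - 2 * f a) t := by
    have hplus := (hF _ (hmem ht).1).comp_const_add a t
    have hminus := (hF _ (hmem ht).2).comp_const_sub a t
    exact ((hplus.sub hminus).sub (((hasDerivAt_id t).const_mul 2).mul_const (f a))).congr_deriv
      (by ring)
  have hmidpoint {t : ℝ} (ht : t ∈ Set.Icc 0 h) : 0 ≤ f (a + t) + f (a - t) - 2 * f a := by
    have := hf.2 (hmem ht).1 (hmem ht).2 (by norm_num : (0 : ℝ) ≤ 1 / 2)
      (by norm_num : (0 : ℝ) ≤ 1 / 2) (by norm_num)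
    simp only [smul_eq_mul] at this
    rw [show 1 / 2 * (a + t) + 1 / 2 * (a - t) = a by ring] at this
    linarith
  have hmono : MonotoneOn (fun t => F (a + t) - F (a - t) - 2 * t * f a) (Set.Icc 0 h) :=
    monotoneOn_of_hasDerivWithinAt_nonneg (convex_Icc 0 h)
      (fun t ht => (hderiv ht).continuousAt.continuousWithinAt)
      (fun t ht => (hderiv (interior_subset ht)).hasDerivWithinAt)
      (fun t ht => hmidpoint (interior_subset ht))
  have := hmono (Set.left_mem_Icc.2 hh) (Set.right_mem_Icc.2 hh) hh
  simp only [add_zero, sub_zero, sub_self, mul_zero, zero_mul] at this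
  linarith

lemma tsum_le_sum_range_add_of_le_sub {f G : ℕ → ℝ} (N : ℕ) (hf : ∀ n, 0 ≤ f n)
    (hG : ∀ n ≥ N, 0 ≤ G n) (hfG : ∀ n ≥ N, f n ≤ G n - G (n + 1)) :
    ∑' n, f n ≤ ∑ n ∈ range N, f n + G N := by
  refine Real.tsum_le_of_sum_range_le hf fun n => ?_
  have htail (k : ℕ) : ∑ i ∈ range (N + k), f i ≤ ∑ i ∈ range N, f i + G N - G (N + k) := by
    induction k with
    | zero => simp
    | succ k ih =>
      rw [← add_assoc, sum_range_succ]
      linarith [hfG (N + k) (by lia)]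
  calc ∑ i ∈ range n, f i
      ≤ ∑ i ∈ range (N + n), f i :=
        sum_le_sum_of_subset_of_nonneg (range_subset_range.2 (by lia)) fun i _ _ => hf i
    _ ≤ ∑ i ∈ range N, f i + G N := by linarith [htail n, hG (N + n) (by lia)]

/-- Here `G` plays the role of `t ↦ ∫ u in Ioi t, f u`. -/
lemma tsum_le_sum_range_add_of_convexOn {f G : ℝ → ℝ} (N : ℕ) (hf0 : ∀ n : ℕ, 0 ≤ f n)
    (hf : ConvexOn ℝ (Set.Ici (N - 1 / 2 : ℝ)) f) (hG0 : ∀ t ≥ (N - 1 / 2 : ℝ), 0 ≤ G t)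
    (hG : ∀ t ≥ (N - 1 / 2 : ℝ), HasDerivAt G (-f t) t) :
    ∑' n : ℕ, f n ≤ ∑ n ∈ range N, f n + G (N - 1 / 2) := by
  refine tsum_le_sum_range_add_of_le_sub (f := fun n => f n)
    (G := fun n => G (n - 1 / 2)) N hf0 (fun n hn => hG0 _ ?_) fun n hn => ?_
  · gcongr
  have hNn : (N : ℝ) ≤ n := by exact_mod_cast hn
  have hsub {t : ℝ} (ht : t ∈ Set.Icc (n - 1 / 2 : ℝ) (n + 1 / 2)) : (N - 1 / 2 : ℝ) ≤ t := by
    linarith [ht.1]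
  have hmid := two_mul_mul_le_sub_of_convexOn (F := -G) (a := n) (h := 1 / 2)
    (by norm_num) (hf.subset (fun t ht => hsub ht) (convex_Icc _ _))
    fun t ht => by simpa only [neg_neg] using (hG t (hsub ht)).neg
  have hsucc : ((n + 1 : ℕ) : ℝ) - 1 / 2 = n + 1 / 2 := by push_cast; ring
  simp only [hsucc, Pi.neg_apply] at hmid ⊢
  linarith

/-! ### Harmonic numbers -/

lemma antitone_harmonic_sub_log_add_half :
    Antitone fun n : ℕ => (harmonic n : ℝ) - log (n + 1 / 2) := by
  refine antitone_nat_of_succ_le fun n => ?_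
  have hpos {t : ℝ} (ht : t ∈ Set.Icc (n + 1 - 1 / 2 : ℝ) (n + 1 + 1 / 2)) : 0 < t := by
    linarith [ht.1, n.cast_nonneg (α := ℝ)]
  have hinv := two_mul_mul_le_sub_of_convexOn (f := fun t => t⁻¹) (F := log) (a := n + 1)
    (h := 1 / 2) (by norm_num)
    (by simpa using (convexOn_zpow (𝕜 := ℝ) (-1)).subset (fun t ht => hpos ht) (convex_Icc _ _))
    (fun t ht => hasDerivAt_log (hpos ht).ne')
  rw [show (n + 1 - 1 / 2 : ℝ) = n + 1 / 2 by ring] at hinv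
  rw [harmonic_succ]
  push_cast
  linarith

lemma eulerMascheroniConstant_le_harmonic_sub_log_add_half (n : ℕ) :
    γ ≤ harmonic n - log (n + 1 / 2) := by
  refine le_of_tendsto tendsto_harmonic_sub_log_add_one ?_
  filter_upwards [eventually_ge_atTop n] with m hnm
  calc (harmonic m : ℝ) - log (m + 1)
      ≤ harmonic m - log (m + 1 / 2) := by gcongr; norm_num
    _ ≤ harmonic n - log (n + 1 / 2) := antitone_harmonic_sub_log_add_half hnm

lemma sum_Ioc_inv_eq_harmonic (u : ℕ) : ∑ n ∈ Ioc 0 u, (n : ℝ)⁻¹ = harmonic u := by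
  rw [harmonic_eq_sum_Icc]
  push_cast
  rfl

lemma log_sub_log_le_div_sub_one {s t : ℝ} (hs : 0 < s) (ht : 0 < t) :
    log t - log s ≤ t / s - 1 := by
  rw [← log_div ht.ne' hs.ne']
  exact log_le_sub_one_of_pos (by positivity)

lemma harmonic_le_add_log_add {s : ℝ} (hs : 0 < s) (u : ℕ) :
    harmonic u ≤ γ + log s + ((u + 1) / s - 1) := by
  have hγ := (eulerMascheroniSeq_lt_eulerMascheroniConstant u).le
  rw [eulerMascheroniSeq] at hγ
  linarith [log_sub_log_le_div_sub_one hs (t := u + 1) (by positivity)]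

lemma add_log_sub_le_harmonic {s : ℝ} (hs : 0 < s) (u : ℕ) :
    γ + log s - (s / (u + 1 / 2) - 1) ≤ harmonic u := by
  linarith [eulerMascheroniConstant_le_harmonic_sub_log_add_half u,
    log_sub_log_le_div_sub_one (s := u + 1 / 2) (by positivity) hs]

/-! ### The error term in the divisor problem -/

/-- The error term `Δ(y) = D(y) - y log y - (2γ - 1) y` in the Dirichlet divisor problem. -/
noncomputable def divisorError (y : ℝ) : ℝ :=
  divisorSummatory ⌊y⌋₊ - (y * log y + (2 * γ - 1) * y)

lemma sum_floor_div_le_mul_harmonic {y : ℝ} (hy : 0 ≤ y) (u : ℕ) :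
    ∑ n ∈ Ioc 0 u, ((⌊y⌋₊ / n : ℕ) : ℝ) ≤ y * harmonic u := by
  rw [← sum_Ioc_inv_eq_harmonic, mul_sum]
  gcongr with n
  rw [← Nat.floor_div_natCast, ← div_eq_mul_inv]
  exact Nat.floor_le (by positivity)

lemma mul_harmonic_sub_le_sum_floor_div (y : ℝ) (u : ℕ) :
    y * harmonic u - u ≤ ∑ n ∈ Ioc 0 u, ((⌊y⌋₊ / n : ℕ) : ℝ) := by
  calc y * harmonic u - u = ∑ n ∈ Ioc 0 u, (y * (n : ℝ)⁻¹ - 1) := by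
        rw [sum_sub_distrib, ← mul_sum, sum_Ioc_inv_eq_harmonic]; simp
    _ ≤ ∑ n ∈ Ioc 0 u, ((⌊y⌋₊ / n : ℕ) : ℝ) := by
        gcongr with n
        rw [← Nat.floor_div_natCast, ← div_eq_mul_inv]
        exact (Nat.sub_one_lt_floor _).le

lemma sqrt_floor_eq_floor_sqrt (y : ℝ) : Nat.sqrt ⌊y⌋₊ = ⌊√y⌋₊ := by
  refine eq_of_forall_le_iff fun n => ?_
  rcases eq_or_ne n 0 with rfl | hn
  · simp
  · rw [Nat.le_sqrt', Nat.le_floor_iff' (pow_ne_zero 2 hn), Nat.le_floor_iff' hn,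
      Real.le_sqrt' (by positivity), Nat.cast_pow]

lemma divisorSummatory_floor_add_sq (y : ℝ) :
    (divisorSummatory ⌊y⌋₊ : ℝ) + ⌊√y⌋₊ ^ 2 =
      2 * ∑ n ∈ Ioc 0 ⌊√y⌋₊, ((⌊y⌋₊ / n : ℕ) : ℝ) := by
  rw [← sqrt_floor_eq_floor_sqrt]
  exact_mod_cast divisorSummatory_add_sqrt_sq ⌊y⌋₊

lemma divisorError_le_two_mul_sqrt {y : ℝ} (hy : 0 < y) : divisorError y ≤ 2 * √y := by
  set s := √y
  set u := ⌊s⌋₊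
  have hs : 0 < s := sqrt_pos.2 hy
  have hys : y = s ^ 2 := (sq_sqrt hy.le).symm
  have hlog : log y = 2 * log s := by rw [hys, log_pow]; norm_num
  calc divisorError y
      = 2 * ∑ n ∈ Ioc 0 u, ((⌊y⌋₊ / n : ℕ) : ℝ) - u ^ 2 - (y * log y + (2 * γ - 1) * y) := by
        rw [divisorError, ← divisorSummatory_floor_add_sq, add_sub_cancel_right]
    _ ≤ 2 * (y * (γ + log s + ((u + 1) / s - 1))) - u ^ 2 - (y * log y + (2 * γ - 1) * y) := by
        gcongr
        exact (sum_floor_div_le_mul_harmonic hy.le u).trans <| by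
          gcongr; exact harmonic_le_add_log_add hs u
    _ = 2 * s - (s - u) ^ 2 := by rw [hlog, hys]; field_simp; ring
    _ ≤ 2 * s := by linarith [sq_nonneg (s - u)]

lemma neg_two_mul_sqrt_le_divisorError {y : ℝ} (hy : 1 ≤ y) : -(2 * √y) ≤ divisorError y := by
  set s := √y
  set u := ⌊s⌋₊
  have hs : 1 ≤ s := one_le_sqrt.2 hy
  have hys : y = s ^ 2 := (sq_sqrt (zero_le_one.trans hy)).symm
  have hlog : log y = 2 * log s := by rw [hys, log_pow]; norm_num
  have hu : (1 : ℝ) ≤ u := by exact_mod_cast (Nat.one_le_floor_iff s).2 hs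
  have hus : (u : ℝ) ≤ s := Nat.floor_le (by positivity)
  have hsu : s < u + 1 := Nat.lt_floor_add_one s
  have hremainder : 2 * s ^ 2 * (s / (u + 1 / 2) - 1) ≤ s ^ 2 - u ^ 2 - 2 * u + 2 * s := by
    rw [div_sub_one (by positivity), mul_div_assoc', div_le_iff₀ (by positivity)]
    obtain ⟨t, ht⟩ : ∃ t, s = u + t := ⟨s - u, by ring⟩
    have ht0 : 0 ≤ t := by linarith
    have ht1 : 0 ≤ 1 - t := by linarith
    rw [ht]
    nlinarith [mul_nonneg ht0 ht1, mul_nonneg (mul_nonneg ht0 ht1) (sub_nonneg.2 hu),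
      mul_nonneg (mul_nonneg ht0 ht1) ht0]
  calc -(2 * s)
      ≤ 2 * (y * (γ + log s - (s / (u + 1 / 2) - 1)) - u) - u ^ 2 -
          (y * log y + (2 * γ - 1) * y) := by
        rw [hlog, hys]; linarith
    _ ≤ 2 * ∑ n ∈ Ioc 0 u, ((⌊y⌋₊ / n : ℕ) : ℝ) - u ^ 2 - (y * log y + (2 * γ - 1) * y) := by
        gcongr
        refine le_trans ?_ (mul_harmonic_sub_le_sum_floor_div y u)
        gcongr
        exact add_log_sub_le_harmonic (by positivity) u
    _ = divisorError y := by
        rw [divisorError, ← divisorSummatory_floor_add_sq, add_sub_cancel_right]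

lemma neg_log_mul_rpow_le {y ε : ℝ} (hy : 0 < y) (hε : 0 < ε) :
    -log y * y ^ ε ≤ (exp 1 * ε)⁻¹ := by
  have h := exp_one_mul_le_exp (x := -(ε * log y))
  rw [exp_neg, mul_comm ε, ← rpow_def_of_pos hy, ← one_div, le_div_iff₀ (by positivity)] at h
  rw [← one_div, le_div_iff₀ (by positivity)]
  linarith

lemma abs_divisorError_le_two_mul_rpow_of_lt_one {y : ℝ} (hy : 0 < y) (hy1 : y < 1) :
    |divisorError y| ≤ 2 * y ^ (2 / 3 : ℝ) := by
  have hself : y ≤ y ^ (2 / 3 : ℝ) := by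
    simpa using rpow_le_rpow_of_exponent_ge hy hy1.le (show (2 / 3 : ℝ) ≤ 1 by norm_num)
  have hlog : y * -log y ≤ 3 / 2 * y ^ (2 / 3 : ℝ) := calc
    y * -log y = y ^ (2 / 3 : ℝ) * (-log y * y ^ (1 / 3 : ℝ)) := by
      rw [mul_left_comm, ← rpow_add hy]; norm_num [mul_comm]
    _ ≤ y ^ (2 / 3 : ℝ) * (2 * (1 / 3))⁻¹ := by
      gcongr
      refine (neg_log_mul_rpow_le hy (by norm_num)).trans ?_
      gcongr
      linarith [exp_one_gt_d9]
    _ = 3 / 2 * y ^ (2 / 3 : ℝ) := by ring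
  have hlog_nonneg : 0 ≤ y * -log y :=
    mul_nonneg hy.le (neg_nonneg.2 (log_nonpos hy.le hy1.le))
  have herror : divisorError y = y * -log y - (2 * γ - 1) * y := by
    rw [divisorError, Nat.floor_eq_zero.2 hy1, divisorSummatory_zero]
    push_cast
    ring
  have hγ_mul_nonneg : 0 ≤ (2 * γ - 1) * y :=
    mul_nonneg (by linarith [one_half_lt_eulerMascheroniConstant]) hy.le
  have hγ_mul_le : (2 * γ - 1) * y ≤ 1 * y := by
    gcongr
    linarith [eulerMascheroniConstant_lt_two_thirds]
  rw [herror, abs_le]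
  constructor <;> linarith

lemma abs_divisorError_le_two_mul_rpow {y : ℝ} (hy : 0 < y) :
    |divisorError y| ≤ 2 * y ^ (2 / 3 : ℝ) := by
  rcases lt_or_ge y 1 with hy1 | hy1
  · exact abs_divisorError_le_two_mul_rpow_of_lt_one hy hy1
  · calc |divisorError y|
        ≤ 2 * √y := abs_le.2 ⟨neg_two_mul_sqrt_le_divisorError hy1, divisorError_le_two_mul_sqrt hy⟩
      _ = 2 * y ^ (1 / 2 : ℝ) := by rw [sqrt_eq_rpow]
      _ ≤ 2 * y ^ (2 / 3 : ℝ) := by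
        gcongr 2 * ?_
        exact rpow_le_rpow_of_exponent_le hy1 (by norm_num)

/-! ### Dirichlet series of the Möbius function -/

lemma hasSum_div_pow_of_LSeriesSummable {f : ℕ → ℝ} {k : ℕ}
    (hf : LSeriesSummable (fun n => (f n : ℂ)) k) (hk : k ≠ 0) :
    HasSum (fun n : ℕ => f n / (n : ℝ) ^ k) (LSeries (fun n => (f n : ℂ)) k).re := by
  convert Complex.hasSum_re hf.LSeriesHasSum using 2 with n
  rcases eq_or_ne n 0 with rfl | hn
  · simp [hk]
  · rw [LSeries.term_of_ne_zero hn, Complex.cpow_natCast]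
    norm_cast

lemma LSeries_moebius {s : ℂ} (hs : 1 < s.re) :
    LSeries (fun n => (μ n : ℂ)) s = (riemannZeta s)⁻¹ := by
  rw [← LSeries_one_eq_riemannZeta hs]
  exact eq_inv_of_mul_eq_one_right (LSeries_one_mul_Lseries_moebius hs)

lemma LSeries_logMul_moebius {s : ℂ} (hs : 1 < s.re) :
    LSeries (LSeries.logMul fun n => (μ n : ℂ)) s =
      -(LSeries (LSeries.logMul 1) s / riemannZeta s ^ 2) := by
  have hμ : LSeries.abscissaOfAbsConv (fun n => (μ n : ℂ)) < s.re := by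
    rw [ArithmeticFunction.abscissaOfAbsConv_moebius]; exact_mod_cast hs
  have hone : LSeries.abscissaOfAbsConv 1 < s.re := by
    rw [LSeries.abscissaOfAbsConv_one]; exact_mod_cast hs
  have hζ : LSeries 1 s ≠ 0 := by
    rw [LSeries_one_eq_riemannZeta hs]; exact riemannZeta_ne_zero_of_one_lt_re hs
  have hinv : LSeries (fun n => (μ n : ℂ)) =ᶠ[𝓝 s] (LSeries 1)⁻¹ := by
    filter_upwards [(isOpen_lt continuous_const Complex.continuous_re).mem_nhds hs] with z hz
    rw [LSeries_moebius hz, Pi.inv_apply, LSeries_one_eq_riemannZeta hz]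
  have hderiv := (LSeries_hasDerivAt hμ).unique
    (((LSeries_hasDerivAt hone).inv hζ).congr_of_eventuallyEq hinv)
  rw [← LSeries_one_eq_riemannZeta hs]
  linear_combination -hderiv

lemma riemannZeta_two_inv : (riemannZeta 2)⁻¹ = ((6 / π ^ 2 : ℝ) : ℂ) := by
  rw [riemannZeta_two, inv_div]
  push_cast
  rfl

lemma hasSum_moebius_div_sq : HasSum (fun d : ℕ => (μ d : ℝ) / d ^ 2) (6 / π ^ 2) := by
  have hs : 1 < ((2 : ℕ) : ℂ).re := by norm_num
  have h := hasSum_div_pow_of_LSeriesSummable (f := fun n => (μ n : ℝ)) (k := 2)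
    (by simpa using ArithmeticFunction.LSeriesSummable_moebius_iff.2 hs) two_ne_zero
  simp only [Complex.ofReal_intCast] at h
  rwa [LSeries_moebius hs, Nat.cast_ofNat, riemannZeta_two_inv, Complex.ofReal_re] at h

lemma hasSum_moebius_mul_log_div_sq :
    HasSum (fun d : ℕ => μ d * log d / (d : ℝ) ^ 2)
      (-((6 / π ^ 2) ^ 2 * ∑' n : ℕ, log n / (n : ℝ) ^ 2)) := by
  have hs : 1 < ((2 : ℕ) : ℂ).re := by norm_num
  have hμ_eq : (LSeries.logMul fun n => (μ n : ℂ)) = fun n : ℕ => ((μ n * log n : ℝ) : ℂ) := by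
    ext n; simp [LSeries.logMul, mul_comm]
  have hone_eq : LSeries.logMul 1 = fun n : ℕ => ((log n : ℝ) : ℂ) := by
    ext n; simp [LSeries.logMul]
  have hμ := hasSum_div_pow_of_LSeriesSummable (k := 2)
    (hμ_eq ▸ LSeriesSummable_logMul_of_lt_re (by
      rw [ArithmeticFunction.abscissaOfAbsConv_moebius]; exact_mod_cast hs)) two_ne_zero
  have hone := hasSum_div_pow_of_LSeriesSummable (k := 2)
    (hone_eq ▸ LSeriesSummable_logMul_of_lt_re (by
      rw [LSeries.abscissaOfAbsConv_one]; exact_mod_cast hs)) two_ne_zero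
  have hvalue := LSeries_logMul_moebius hs
  rw [hμ_eq, hone_eq, div_eq_mul_inv, ← inv_pow, Nat.cast_ofNat, riemannZeta_two_inv,
    ← Complex.ofReal_pow, mul_comm, ← Nat.cast_ofNat] at hvalue
  rw [hvalue, Complex.neg_re, Complex.re_ofReal_mul, ← hone.tsum_eq] at hμ
  exact hμ

lemma hasSum_moebius_mul_mul_log_add {x : ℝ} (hx : 0 < x) (a : ℝ) :
    HasSum (fun d : ℕ => μ d * (x / d ^ 2 * log (x / d ^ 2) + a * (x / d ^ 2)))
      (6 / π ^ 2 * (x * log x + a * x) +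
        2 * ((6 / π ^ 2) ^ 2 * ∑' n : ℕ, log n / (n : ℝ) ^ 2) * x) := by
  have hterm (d : ℕ) : μ d * (x / d ^ 2 * log (x / d ^ 2) + a * (x / d ^ 2)) =
      μ d / d ^ 2 * (x * log x + a * x) + μ d * log d / d ^ 2 * (-2 * x) := by
    rcases eq_or_ne d 0 with rfl | hd
    · simp
    · rw [log_div hx.ne' (by positivity), log_pow]
      push_cast
      ring
  have hvalue (Z : ℝ) : 6 / π ^ 2 * (x * log x + a * x) + 2 * ((6 / π ^ 2) ^ 2 * Z) * x =
      6 / π ^ 2 * (x * log x + a * x) + -((6 / π ^ 2) ^ 2 * Z) * (-2 * x) := by ring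
  simp only [hterm, hvalue]
  exact (hasSum_moebius_div_sq.mul_right _).add (hasSum_moebius_mul_log_div_sq.mul_right _)

/-! ### The summatory function of `2 ^ ω` -/

lemma hasSum_moebius_mul_divisorSummatory (x : ℝ) :
    HasSum (fun d : ℕ => (μ d : ℝ) * divisorSummatory ⌊x / d ^ 2⌋₊)
      (∑ n ∈ Icc 1 ⌊x⌋₊, (2 : ℝ) ^ n.primeFactors.card) := by
  have hfloor (d : ℕ) : ⌊x / d ^ 2⌋₊ = ⌊x⌋₊ / d ^ 2 := by
    exact_mod_cast Nat.floor_div_natCast x (d ^ 2)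
  have hfinite : ∑ n ∈ Icc 1 ⌊x⌋₊, (2 : ℝ) ^ n.primeFactors.card =
      ∑ d ∈ Ioc 0 ⌊x⌋₊, (μ d : ℝ) * divisorSummatory (⌊x⌋₊ / d ^ 2) := by
    exact_mod_cast sum_two_pow_card_primeFactors_eq_sum_moebius_mul ⌊x⌋₊
  simp only [hfloor, hfinite]
  refine hasSum_sum_of_ne_finset_zero fun d hd => ?_
  rcases d.eq_zero_or_pos with rfl | hd0
  · simp
  · have hlt : ⌊x⌋₊ < d := by simpa [hd0] using hd
    rw [Nat.div_eq_of_lt (hlt.trans_le (Nat.le_self_pow two_ne_zero d)), divisorSummatory_zero,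
      Nat.cast_zero, mul_zero]

lemma abs_moebius_mul_divisorError_le {x : ℝ} (hx : 0 < x) (d : ℕ) :
    |μ d * divisorError (x / d ^ 2)| ≤ 2 * x ^ (2 / 3 : ℝ) * (d : ℝ) ^ (-(4 / 3) : ℝ) := by
  rcases eq_or_ne d 0 with rfl | hd
  · simp
  have hμ : |(μ d : ℝ)| ≤ 1 := by exact_mod_cast ArithmeticFunction.abs_moebius_le_one
  calc |μ d * divisorError (x / d ^ 2)|
      = |(μ d : ℝ)| * |divisorError (x / d ^ 2)| := abs_mul _ _
    _ ≤ 1 * (2 * (x / d ^ 2) ^ (2 / 3 : ℝ)) := by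
        gcongr
        exact abs_divisorError_le_two_mul_rpow (by positivity)
    _ = 2 * x ^ (2 / 3 : ℝ) * (d : ℝ) ^ (-(4 / 3) : ℝ) := by
        rw [div_rpow hx.le (by positivity), ← rpow_natCast_mul (by positivity),
          rpow_neg (by positivity)]
        norm_num [div_eq_mul_inv, mul_assoc]

theorem abs_sum_two_pow_card_primeFactors_sub_le {x : ℝ} (hx : 0 < x) :
    |∑ n ∈ Icc 1 ⌊x⌋₊, (2 : ℝ) ^ n.primeFactors.card -
        (6 / π ^ 2 * (x * log x + (2 * γ - 1) * x) +
          2 * ((6 / π ^ 2) ^ 2 * ∑' n : ℕ, log n / (n : ℝ) ^ 2) * x)| ≤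
      2 * x ^ (2 / 3 : ℝ) * ∑' d : ℕ, (d : ℝ) ^ (-(4 / 3) : ℝ) := by
  have herror := (hasSum_moebius_mul_divisorSummatory x).sub
    (hasSum_moebius_mul_mul_log_add hx (2 * γ - 1))
  simp only [← mul_sub] at herror
  have hbound := (Real.summable_nat_rpow.2 (by norm_num : (-(4 / 3) : ℝ) < -1)).hasSum.mul_left
    (2 * x ^ (2 / 3 : ℝ))
  exact herror.norm_le_of_bounded hbound (abs_moebius_mul_divisorError_le hx)

/-! ### Numerical constants -/

lemma convexOn_rpow_neg {s : ℝ} (hs : 0 ≤ s) : ConvexOn ℝ (Set.Ioi 0) fun t : ℝ => t ^ (-s) := by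
  have hderiv (p : ℝ) {t : ℝ} (ht : t ∈ interior (Set.Ioi (0 : ℝ))) :=
    (hasDerivAt_rpow_const (p := p) (Or.inl (interior_subset ht).ne')).hasDerivWithinAt
      (s := interior (Set.Ioi 0))
  refine convexOn_of_hasDerivWithinAt2_nonneg (f' := fun t => -s * t ^ (-s - 1))
    (f'' := fun t => -s * ((-s - 1) * t ^ (-s - 1 - 1))) (convex_Ioi 0)
    (fun t ht => (continuousAt_rpow_const t _ (Or.inl ht.ne')).continuousWithinAt)
    (fun t ht => hderiv _ ht) (fun t ht => (hderiv _ ht).const_mul _) fun t ht => ?_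
  have : 0 < t := interior_subset ht
  rw [show -s * ((-s - 1) * t ^ (-s - 1 - 1)) = s * (s + 1) * t ^ (-s - 1 - 1) by ring]
  positivity

lemma tsum_rpow_neg_le {s : ℝ} (hs : 1 < s) :
    ∑' n : ℕ, (n : ℝ) ^ (-s) ≤ 2 ^ (s - 1) / (s - 1) := by
  have hs1 : 0 < s - 1 := sub_pos.2 hs
  have hhalf : ((1 : ℕ) - 1 / 2 : ℝ) = 2⁻¹ := by norm_num
  have hpos {t : ℝ} (ht : (1 : ℕ) - 1 / 2 ≤ t) : 0 < t :=
    lt_of_lt_of_le (by norm_num) ht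
  have hderiv {t : ℝ} (ht : (1 : ℕ) - 1 / 2 ≤ t) :
      HasDerivAt (fun t => t ^ (1 - s) / (s - 1)) (-t ^ (-s)) t := by
    refine ((hasDerivAt_rpow_const (Or.inl (hpos ht).ne')).div_const (s - 1)).congr_deriv ?_
    rw [sub_sub_cancel_left, ← neg_sub s 1]
    field_simp
  calc ∑' n : ℕ, (n : ℝ) ^ (-s)
      ≤ ∑ n ∈ range 1, (n : ℝ) ^ (-s) + ((1 : ℕ) - 1 / 2) ^ (1 - s) / (s - 1) :=
        tsum_le_sum_range_add_of_convexOn 1 (fun n => by positivity)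
          ((convexOn_rpow_neg (by positivity)).subset (fun t ht => hpos ht) (convex_Ici _))
          (fun t ht => div_nonneg (rpow_nonneg (hpos ht).le _) hs1.le) fun t ht => hderiv ht
    _ = 2 ^ (s - 1) / (s - 1) := by
        rw [sum_range_one, Nat.cast_zero, zero_rpow (by linarith), zero_add, hhalf,
          inv_rpow zero_le_two, ← rpow_neg zero_le_two, neg_sub]

lemma tsum_rpow_neg_four_thirds_le : ∑' n : ℕ, (n : ℝ) ^ (-(4 / 3) : ℝ) ≤ 3.84 := by
  have hcbrt : (2 : ℝ) ^ (1 / 3 : ℝ) ≤ 1.28 := by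
    rw [one_div, rpow_inv_le_iff_of_pos (by norm_num) (by norm_num) (by norm_num)]
    norm_num
  calc ∑' n : ℕ, (n : ℝ) ^ (-(4 / 3) : ℝ)
      ≤ 2 ^ (4 / 3 - 1 : ℝ) / (4 / 3 - 1) := tsum_rpow_neg_le (by norm_num)
    _ = 3 * 2 ^ (1 / 3 : ℝ) := by norm_num; ring
    _ ≤ 3.84 := by linarith

lemma convexOn_log_div_sq : ConvexOn ℝ (Set.Ici (exp (5 / 6))) fun t => log t / t ^ 2 := by
  have hpos {t : ℝ} (ht : t ∈ Set.Ici (exp (5 / 6))) : 0 < t := (exp_pos _).trans_le ht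
  have hderiv {t : ℝ} (ht : t ∈ Set.Ici (exp (5 / 6))) :
      HasDerivAt (fun t => log t / t ^ 2) ((1 - 2 * log t) / t ^ 3) t := by
    have := hpos ht
    refine ((hasDerivAt_log this.ne').div (hasDerivAt_pow 2 t) (by positivity)).congr_deriv ?_
    norm_num
    field_simp
  have hderiv2 {t : ℝ} (ht : t ∈ Set.Ici (exp (5 / 6))) :
      HasDerivAt (fun t => (1 - 2 * log t) / t ^ 3) ((6 * log t - 5) / t ^ 4) t := by
    have := hpos ht
    refine ((((hasDerivAt_log this.ne').const_mul 2).const_sub 1).div (hasDerivAt_pow 3 t)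
      (by positivity)).congr_deriv ?_
    field_simp
    ring
  refine convexOn_of_hasDerivWithinAt2_nonneg (convex_Ici _)
    (fun t ht => (hderiv ht).continuousAt.continuousWithinAt)
    (fun t ht => (hderiv (interior_subset ht)).hasDerivWithinAt)
    (fun t ht => (hderiv2 (interior_subset ht)).hasDerivWithinAt) fun t ht => ?_
  have hlog : 5 / 6 ≤ log t := (le_log_iff_exp_le (hpos (interior_subset ht))).2
    (interior_subset ht)
  exact div_nonneg (by linarith) (by positivity)

lemma tsum_log_div_sq_le_sum_range_add {N : ℕ} (hN : exp (5 / 6) ≤ N - 1 / 2) :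
    ∑' n : ℕ, log n / (n : ℝ) ^ 2 ≤
      ∑ n ∈ range N, log n / (n : ℝ) ^ 2 + (log (N - 1 / 2) + 1) / (N - 1 / 2) := by
  have hpos {t : ℝ} (ht : N - 1 / 2 ≤ t) : 0 < t := (exp_pos _).trans_le (hN.trans ht)
  have hlog {t : ℝ} (ht : N - 1 / 2 ≤ t) : 0 ≤ log t := log_nonneg <|
    (one_le_exp (by norm_num)).trans (hN.trans ht)
  have hderiv {t : ℝ} (ht : N - 1 / 2 ≤ t) :
      HasDerivAt (fun t => (log t + 1) / t) (-(log t / t ^ 2)) t := by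
    have := hpos ht
    refine (((hasDerivAt_log this.ne').add_const 1).div (hasDerivAt_id t) this.ne').congr_deriv ?_
    simp only [id, mul_one]
    field_simp
    ring
  exact tsum_le_sum_range_add_of_convexOn (f := fun t => log t / t ^ 2)
    (G := fun t => (log t + 1) / t) N
    (fun n => div_nonneg (log_natCast_nonneg n) (by positivity))
    (convexOn_log_div_sq.subset (Set.Ici_subset_Ici.2 hN) (convex_Ici _))
    (fun t ht => div_nonneg (by linarith [hlog ht]) (hpos ht).le) fun t ht => hderiv ht

lemma log_seven_lt_d7 : log 7 < 1.9459105 := by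
  have hratio := log_sub_log_le_div_sub_one (s := 2 ^ 5 * 3 * 5 ^ 2) (t := 7 ^ 4) (by norm_num)
    (by norm_num)
  rw [log_mul (by norm_num) (by norm_num), log_mul (by norm_num) (by norm_num), log_pow, log_pow,
    log_pow] at hratio
  norm_num at hratio ⊢
  linarith [log_two_lt_d9, log_three_lt_d9, log_five_lt_d9]

lemma log_eleven_lt_d5 : log 11 < 2.39793 := by
  have hratio := log_sub_log_le_div_sub_one (s := 2 ^ 3 * 3 * 5) (t := 11 ^ 2) (by norm_num)
    (by norm_num)
  rw [log_mul (by norm_num) (by norm_num), log_mul (by norm_num) (by norm_num), log_pow,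
    log_pow] at hratio
  norm_num at hratio ⊢
  linarith [log_two_lt_d9, log_three_lt_d9, log_five_lt_d9]

lemma tsum_log_div_sq_le : ∑' n : ℕ, log n / (n : ℝ) ^ 2 ≤ 0.93764 := by
  have hcut : ((13 : ℕ) - 1 / 2 : ℝ) = 25 / 2 := by norm_num
  have hexp : exp (5 / 6) ≤ (13 : ℕ) - 1 / 2 := calc
    exp (5 / 6) ≤ exp 1 := by gcongr; norm_num
    _ ≤ (13 : ℕ) - 1 / 2 := by rw [hcut]; linarith [exp_one_lt_d9]
  refine (tsum_log_div_sq_le_sum_range_add hexp).trans ?_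
  have h4 : log 4 = 2 * log 2 := log_four_eq
  have h6 : log 6 = log 2 + log 3 := by rw [← log_mul] <;> norm_num
  have h8 : log 8 = 3 * log 2 := by rw [← log_rpow two_pos]; norm_num
  have h9 : log 9 = 2 * log 3 := by rw [← log_rpow three_pos]; norm_num
  have h10 : log 10 = log 2 + log 5 := log_ten_eq
  have h12 : log 12 = 2 * log 2 + log 3 := by rw [← h4, ← log_mul] <;> norm_num
  have h25 : log (25 / 2) = 2 * log 5 - log 2 := by
    rw [← log_rpow (by norm_num), ← log_div] <;> norm_num
  simp only [hcut, sum_range_succ, range_zero, sum_empty]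
  push_cast
  rw [log_one, log_zero, h4, h6, h8, h9, h10, h12, h25]
  linarith [log_two_lt_d9, log_three_lt_d9, log_five_lt_d9, log_two_gt_d9, log_seven_lt_d7,
    log_eleven_lt_d5]

lemma eulerMascheroniConstant_lt_d5 : γ < 0.57725 := by
  have hγ := eulerMascheroniConstant_le_harmonic_sub_log_add_half 40
  have hlog : log ((40 : ℕ) + 1 / 2) = 4 * log 3 - log 2 := by
    rw [show ((40 : ℕ) + 1 / 2 : ℝ) = 3 ^ 4 / 2 by norm_num, log_div (by norm_num) (by norm_num),
      log_pow]
    norm_num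
  have hharmonic : (harmonic 40 : ℝ) < (4.2785431 : ℚ) := by
    rw [Rat.cast_lt, harmonic]
    norm_num [sum_range_succ]
  push_cast at hharmonic
  rw [hlog] at hγ
  linarith [log_three_gt_d9, log_two_lt_d9]

lemma six_div_pi_sq_lt_d6 : 6 / π ^ 2 < 0.607928 := by
  rw [div_lt_iff₀ (by positivity)]
  nlinarith [pi_gt_d6]

lemma linear_coefficient_le :
    6 / π ^ 2 * (2 * γ - 1) + 2 * ((6 / π ^ 2) ^ 2 * ∑' n : ℕ, log n / (n : ℝ) ^ 2) ≤ 0.787 := by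
  have hγ : 0 ≤ 2 * γ - 1 := by linarith [one_half_lt_eulerMascheroniConstant]
  calc 6 / π ^ 2 * (2 * γ - 1) + 2 * ((6 / π ^ 2) ^ 2 * ∑' n : ℕ, log n / (n : ℝ) ^ 2)
      ≤ 0.607928 * (2 * 0.57725 - 1) + 2 * (0.607928 ^ 2 * 0.93764) := by
        gcongr
        · exact six_div_pi_sq_lt_d6.le
        · exact eulerMascheroniConstant_lt_d5.le
        · exact six_div_pi_sq_lt_d6.le
        · exact tsum_log_div_sq_le
    _ ≤ 0.787 := by norm_num

theorem stmt_16 (x : ℝ) (hx : 1 ≤ x) :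
    ∑ n ∈ Finset.Icc 1 ⌊x⌋₊, (2 : ℝ) ^ n.primeFactors.card ≤
      6 / Real.pi ^ 2 * x * Real.log x + 0.787 * x + 8.14 * x ^ ((2 : ℝ) / 3) -
        0.3762 := by
  have hx0 : 0 < x := zero_lt_one.trans_le hx
  have herror := (abs_le.1 (abs_sum_two_pow_card_primeFactors_sub_le hx0)).2
  have hzeta := mul_le_mul_of_nonneg_left tsum_rpow_neg_four_thirds_le
    (show 0 ≤ 2 * x ^ (2 / 3 : ℝ) by positivity)
  have hlinear := mul_le_mul_of_nonneg_left linear_coefficient_le hx0.le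
  have hpow : 1 ≤ x ^ (2 / 3 : ℝ) := one_le_rpow hx (by norm_num)
  linarith
end
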